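/- Under Assumptions (W) and (Lip), let (𝛑, 𝛍) be a solution of the M equivalence classes method, i.e. 𝛑 = Φ̂(𝛍) is block-constant with π^α = π^{α_m} optimal for J^𝛍_{α_m} on Ĩ_m, and 𝛍 = Ψ̂(𝛑). Then for any ε, p > 0 there exist M ∈ ℕ and N' ∈ ℕ such that for all N > N', the N-agent policy tuple (π¹,…,π^N) = Γ_N(𝛑) is an (ε,p)-Markov–Nash equilibrium of the N-agent graph game. -/

import Mathlib

open MeasureTheory Filter
open scoped BigOperators

namespace GMFG

variable {𝒳 𝒰 : Type*}

/-- The probability simplex 𝒫(𝒳) on a finite set, as probability mass functions. -/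
def simplex (𝒳 : Type*) [Fintype 𝒳] : Set (𝒳 → ℝ) :=
  {p | (∀ x, 0 ≤ p x) ∧ ∑ x, p x = 1}

/-- The set ℬ₁(𝒳) of (sub-probability) measures with total mass at most 1,
as mass functions. -/
def subProb (𝒳 : Type*) [Fintype 𝒳] : Set (𝒳 → ℝ) :=
  {p | (∀ x, 0 ≤ p x) ∧ ∑ x, p x ≤ 1}

/-- L¹ distance between measures on a finite set. -/
noncomputable def l1dist [Fintype 𝒳] (ν ν' : 𝒳 → ℝ) : ℝ := ∑ x, |ν x - ν' x|

/-- Markovian feedback policies π ∈ Π = 𝒫(𝒰)^{𝒯×𝒳}. -/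
def IsPolicy [Fintype 𝒰] (π : ℕ → 𝒳 → 𝒰 → ℝ) : Prop :=
  ∀ t x, (∀ u, 0 ≤ π t x u) ∧ ∑ u, π t x u = 1

/-- P : 𝒳×𝒰×ℬ₁(𝒳) → 𝒫(𝒳) is a transition kernel. -/
def IsKernel [Fintype 𝒳] [Fintype 𝒰] (P : 𝒳 → 𝒰 → (𝒳 → ℝ) → 𝒳 → ℝ) : Prop :=
  ∀ x u ν, ν ∈ subProb 𝒳 → P x u ν ∈ simplex 𝒳

/-- Lipschitz continuity of the transition kernel w.r.t. the L¹ norm. -/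
def KernelLipschitz [Fintype 𝒳] [Fintype 𝒰] (P : 𝒳 → 𝒰 → (𝒳 → ℝ) → 𝒳 → ℝ) (L : ℝ) : Prop :=
  ∀ x u ν ν', ν ∈ subProb 𝒳 → ν' ∈ subProb 𝒳 → l1dist (P x u ν) (P x u ν') ≤ L * l1dist ν ν'

/-- Lipschitz continuity of the reward w.r.t. the L¹ norm. -/
def RewardLipschitz [Fintype 𝒳] [Fintype 𝒰] (r : 𝒳 → 𝒰 → (𝒳 → ℝ) → ℝ) (L : ℝ) : Prop :=
  ∀ x u ν ν', ν ∈ subProb 𝒳 → ν' ∈ subProb 𝒳 → |r x u ν - r x u ν'| ≤ L * l1dist ν ν'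

/-- A graphon: symmetric, measurable, [0,1]-valued. -/
def IsGraphon (W : ℝ → ℝ → ℝ) : Prop :=
  Measurable (Function.uncurry W) ∧ (∀ a b, W a b = W b a) ∧ ∀ a b, W a b ∈ Set.Icc (0:ℝ) 1

/-- Lipschitz continuity of a graphon on [0,1]². -/
def GraphonLipschitz (W : ℝ → ℝ → ℝ) (L : ℝ) : Prop :=
  ∀ a b a' b' : ℝ, a ∈ Set.Icc (0:ℝ) 1 → b ∈ Set.Icc (0:ℝ) 1 → a' ∈ Set.Icc (0:ℝ) 1 →
    b' ∈ Set.Icc (0:ℝ) 1 → |W a b - W a' b'| ≤ L * (|a - a'| + |b - b'|)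

/-- The neighborhood mean field 𝔾^α = ∫₀¹ W(α,β) ν^β dβ of a state marginal ensemble ν. -/
noncomputable def nbhd [Fintype 𝒳] (W : ℝ → ℝ → ℝ) (ν : ℝ → 𝒳 → ℝ) (α : ℝ) : 𝒳 → ℝ :=
  fun x => ∫ β in Set.Ioc (0:ℝ) 1, W α β * ν β x

/-- 𝛍 = Ψ(𝛑): the (measurable) mean field ensemble generated by the policy ensemble 𝛑,
via μ^α_0 = μ₀ and
μ^α_{t+1}(x') = Σ_{x,u} μ^α_t(x) π^α_t(u|x) P(x'|x,u,𝔾^α_t). -/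
def IsMeanFieldOf [Fintype 𝒳] [Fintype 𝒰] (W : ℝ → ℝ → ℝ) (P : 𝒳 → 𝒰 → (𝒳 → ℝ) → 𝒳 → ℝ)
    (μ0 : 𝒳 → ℝ) (πe : ℝ → ℕ → 𝒳 → 𝒰 → ℝ) (μ : ℕ → ℝ → 𝒳 → ℝ) : Prop :=
  (∀ t x, Measurable fun α => μ t α x) ∧
  (∀ α ∈ Set.Icc (0:ℝ) 1, μ 0 α = μ0) ∧
  ∀ t : ℕ, ∀ α ∈ Set.Icc (0:ℝ) 1, ∀ x' : 𝒳,
    μ (t+1) α x' = ∑ x, μ t α x * ∑ u, πe α t x u * P x u (nbhd W (μ t) α) x'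

/-- The law of the state of a single mean field agent with neighborhood mean field
G and policy π: X_0 ∼ μ₀, U_t ∼ π_t(·|X_t), X_{t+1} ∼ P(·|X_t,U_t,G_t). -/
noncomputable def stateLaw [Fintype 𝒳] [Fintype 𝒰] (P : 𝒳 → 𝒰 → (𝒳 → ℝ) → 𝒳 → ℝ)
    (μ0 : 𝒳 → ℝ) (G : ℕ → 𝒳 → ℝ) (π : ℕ → 𝒳 → 𝒰 → ℝ) : ℕ → 𝒳 → ℝ
  | 0 => μ0
  | (t+1) => fun x' => ∑ x, stateLaw P μ0 G π t x * ∑ u, π t x u * P x u (G t) x'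

/-- Mean field objective J(π) = E[Σ_{t<T} r(X_t,U_t,G_t)] of a single agent whose
neighborhood mean field is G. -/
noncomputable def Jmf [Fintype 𝒳] [Fintype 𝒰] (T : ℕ) (r : 𝒳 → 𝒰 → (𝒳 → ℝ) → ℝ)
    (P : 𝒳 → 𝒰 → (𝒳 → ℝ) → 𝒳 → ℝ) (μ0 : 𝒳 → ℝ) (G : ℕ → 𝒳 → ℝ) (π : ℕ → 𝒳 → 𝒰 → ℝ) : ℝ :=
  ∑ t ∈ Finset.range T, ∑ x, stateLaw P μ0 G π t x * ∑ u, π t x u * r x u (G t)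

/-- A Graphon Mean Field Equilibrium: a measurable policy ensemble 𝛑 and mean field
ensemble 𝛍 with 𝛍 = Ψ(𝛑) and π^α optimal for J^𝛍_α for every α ∈ [0,1]. -/
def IsGMFE [Fintype 𝒳] [Fintype 𝒰] (T : ℕ) (W : ℝ → ℝ → ℝ) (P : 𝒳 → 𝒰 → (𝒳 → ℝ) → 𝒳 → ℝ)
    (r : 𝒳 → 𝒰 → (𝒳 → ℝ) → ℝ) (μ0 : 𝒳 → ℝ)
    (πe : ℝ → ℕ → 𝒳 → 𝒰 → ℝ) (μ : ℕ → ℝ → 𝒳 → ℝ) : Prop :=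
  (∀ t x u, Measurable fun α => πe α t x u) ∧
  (∀ α ∈ Set.Icc (0:ℝ) 1, IsPolicy (πe α)) ∧
  IsMeanFieldOf W P μ0 πe μ ∧
  ∀ α ∈ Set.Icc (0:ℝ) 1, ∀ π' : ℕ → 𝒳 → 𝒰 → ℝ, IsPolicy π' →
    Jmf T r P μ0 (fun t => nbhd W (μ t) α) π' ≤ Jmf T r P μ0 (fun t => nbhd W (μ t) α) (πe α)

/-- α ↦ π^α is Lipschitz continuous up to a finite set D of discontinuities. -/
def EnsembleLipschitzUpTo [Fintype 𝒳] [Fintype 𝒰] (πe : ℝ → ℕ → 𝒳 → 𝒰 → ℝ) : Prop :=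
  ∃ (L : ℝ) (D : Finset ℝ), ∀ (t : ℕ) (x : 𝒳) (u : 𝒰),
    ∀ α ∈ Set.Icc (0:ℝ) 1, ∀ β ∈ Set.Icc (0:ℝ) 1,
      (∀ d ∈ D, d ∉ Set.uIcc α β) → |πe α t x u - πe β t x u| ≤ L * |α - β|

/-- Edge indicators of a simple (undirected) graph. -/
def IsEdgeWeights {N : ℕ} (ξ : Fin N → Fin N → ℝ) : Prop :=
  (∀ i j, ξ i j = 0 ∨ ξ i j = 1) ∧ ∀ i j, ξ i j = ξ j i

/-- Empirical neighborhood mean field 𝔾ⁱ = (1/N) Σ_j ξ_{ij} δ_{X^j}. -/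
noncomputable def empNbhd [Fintype 𝒳] [DecidableEq 𝒳] {N : ℕ} (ξ : Fin N → Fin N → ℝ)
    (X : Fin N → 𝒳) (i : Fin N) : 𝒳 → ℝ :=
  fun x => (N : ℝ)⁻¹ * ∑ j, ξ i j * (if X j = x then 1 else 0)

/-- The joint law of the N agents' states at time t: X^i_0 ∼ μ₀ i.i.d.,
U^i_t ∼ π^i_t(·|X^i_t), X^i_{t+1} ∼ P(·|X^i_t,U^i_t,𝔾^i_t) conditionally independently. -/
noncomputable def jointLaw [Fintype 𝒳] [DecidableEq 𝒳] [Fintype 𝒰] {N : ℕ}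
    (P : 𝒳 → 𝒰 → (𝒳 → ℝ) → 𝒳 → ℝ) (μ0 : 𝒳 → ℝ) (ξ : Fin N → Fin N → ℝ)
    (πs : Fin N → ℕ → 𝒳 → 𝒰 → ℝ) : ℕ → (Fin N → 𝒳) → ℝ
  | 0 => fun X => ∏ i, μ0 (X i)
  | (t+1) => fun Y => ∑ X : Fin N → 𝒳, jointLaw P μ0 ξ πs t X *
      ∏ i, ∑ u, πs i t (X i) u * P (X i) u (empNbhd ξ X i) (Y i)

/-- The objective J^N_i = E[Σ_{t<T} r(X^i_t,U^i_t,𝔾^i_t)] of agent i in the N-agent game. -/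
noncomputable def JN [Fintype 𝒳] [DecidableEq 𝒳] [Fintype 𝒰] {N : ℕ} (T : ℕ)
    (r : 𝒳 → 𝒰 → (𝒳 → ℝ) → ℝ) (P : 𝒳 → 𝒰 → (𝒳 → ℝ) → 𝒳 → ℝ) (μ0 : 𝒳 → ℝ)
    (ξ : Fin N → Fin N → ℝ) (πs : Fin N → ℕ → 𝒳 → 𝒰 → ℝ) (i : Fin N) : ℝ :=
  ∑ t ∈ Finset.range T, ∑ X : Fin N → 𝒳, jointLaw P μ0 ξ πs t X *
    ∑ u, πs i t (X i) u * r (X i) u (empNbhd ξ X i)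

/-- Γ_N(𝛑) = (π^{1/N},…,π^{N/N}) (agent i : Fin N has graphon index (i+1)/N). -/
noncomputable def gammaN (πe : ℝ → ℕ → 𝒳 → 𝒰 → ℝ) (N : ℕ) : Fin N → ℕ → 𝒳 → 𝒰 → ℝ :=
  fun i => πe ((((i : ℕ) : ℝ) + 1) / N)

/-- The step graphon W_N of a finite graph: W_N(x,y) = ξ_{⌈Nx⌉,⌈Ny⌉}. -/
noncomputable def stepGraphon {N : ℕ} (ξ : Fin N → Fin N → ℝ) : ℝ → ℝ → ℝ := fun a b =>
  ∑ i : Fin N, ∑ j : Fin N,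
    (if ((i : ℕ) : ℝ) / N < a ∧ a ≤ (((i : ℕ) : ℝ) + 1) / N then 1 else 0) *
    (if ((j : ℕ) : ℝ) / N < b ∧ b ≤ (((j : ℕ) : ℝ) + 1) / N then 1 else 0) * ξ i j

/-- Assumption (W): ‖W_N − W‖_{L∞→L1} → 0, i.e.
sup_{‖g‖∞ ≤ 1} ∫₀¹ |∫₀¹ (W_N(α,β) − W(α,β)) g(β) dβ| dα → 0. -/
def OpConvergesTo (WN : (N : ℕ) → ℝ → ℝ → ℝ) (W : ℝ → ℝ → ℝ) : Prop :=
  ∀ ε > (0:ℝ), ∃ N₀ : ℕ, ∀ N ≥ N₀, ∀ g : ℝ → ℝ, Measurable g → (∀ β, |g β| ≤ 1) →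
    (∫ α in Set.Ioc (0:ℝ) 1, |∫ β in Set.Ioc (0:ℝ) 1, (WN N α β - W α β) * g β|) ≤ ε

/-- ‖W_N − W‖_{L∞→L1} = O(1/√N). -/
def OpRateSqrt (WN : (N : ℕ) → ℝ → ℝ → ℝ) (W : ℝ → ℝ → ℝ) : Prop :=
  ∃ C : ℝ, ∀ N : ℕ, 1 ≤ N → ∀ g : ℝ → ℝ, Measurable g → (∀ β, |g β| ≤ 1) →
    (∫ α in Set.Ioc (0:ℝ) 1, |∫ β in Set.Ioc (0:ℝ) 1, (WN N α β - W α β) * g β|) ≤ C / Real.sqrt N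

/-- 𝛍^N_t(f) = ∫₀¹ f(X^{⌈Nα⌉}, α) dα, the integral of f against the random empirical
step measure ensemble. -/
noncomputable def empInt [Fintype 𝒳] {N : ℕ} (f : 𝒳 → ℝ → ℝ) (X : Fin N → 𝒳) : ℝ :=
  ∑ i : Fin N, ∫ α in Set.Ioc (((i : ℕ) : ℝ) / N) ((((i : ℕ) : ℝ) + 1) / N), f (X i) α

/-- 𝛍_t(f) = ∫₀¹ Σ_x f(x,α) μ^α_t(x) dα. -/
noncomputable def mfInt [Fintype 𝒳] (f : 𝒳 → ℝ → ℝ) (ν : ℝ → 𝒳 → ℝ) : ℝ :=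
  ∫ α in Set.Ioc (0:ℝ) 1, ∑ x, f x α * ν α x

/-- The representative α_m = (m+1)/M of the m-th equivalence class Ĩ_m = (m/M,(m+1)/M]. -/
noncomputable def rep (M : ℕ) (m : Fin M) : ℝ := (((m : ℕ) : ℝ) + 1) / M

/-- Discretized neighborhood mean field 𝔾̂^{α_m} = (1/M) Σ_n W(α_m,α_n) ν^{α_n}. -/
noncomputable def approxNbhd [Fintype 𝒳] {M : ℕ} (W : ℝ → ℝ → ℝ) (ν : Fin M → 𝒳 → ℝ)
    (m : Fin M) : 𝒳 → ℝ :=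
  fun x => (M : ℝ)⁻¹ * ∑ n, W (rep M m) (rep M n) * ν n x

/-- The approximate mean field μ̂ = Ψ̂(𝛑) of the M equivalence classes method. -/
noncomputable def approxMF [Fintype 𝒳] [Fintype 𝒰] {M : ℕ} (W : ℝ → ℝ → ℝ)
    (P : 𝒳 → 𝒰 → (𝒳 → ℝ) → 𝒳 → ℝ) (μ0 : 𝒳 → ℝ) (πm : Fin M → ℕ → 𝒳 → 𝒰 → ℝ) :
    ℕ → Fin M → 𝒳 → ℝ
  | 0 => fun _ => μ0
  | (t+1) => fun m x' => ∑ x, approxMF W P μ0 πm t m x *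
      ∑ u, πm m t x u * P x u (approxNbhd W (approxMF W P μ0 πm t) m) x'

/-- A solution (𝛑, 𝛍) of the M equivalence classes method: 𝛑 is determined by policies
π^{α_m} (one per class), each optimal for the generated approximate mean field 𝛍 = Ψ̂(𝛑). -/
def IsEqClassSolution [Fintype 𝒳] [Fintype 𝒰] (T : ℕ) {M : ℕ} (W : ℝ → ℝ → ℝ)
    (P : 𝒳 → 𝒰 → (𝒳 → ℝ) → 𝒳 → ℝ) (r : 𝒳 → 𝒰 → (𝒳 → ℝ) → ℝ) (μ0 : 𝒳 → ℝ)
    (πm : Fin M → ℕ → 𝒳 → 𝒰 → ℝ) : Prop :=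
  (∀ m, IsPolicy (πm m)) ∧
  ∀ m, ∀ π' : ℕ → 𝒳 → 𝒰 → ℝ, IsPolicy π' →
    Jmf T r P μ0 (fun t => approxNbhd W (approxMF W P μ0 πm t) m) π'
      ≤ Jmf T r P μ0 (fun t => approxNbhd W (approxMF W P μ0 πm t) m) (πm m)

/-- The optimal action value function Q with k steps to go from time t,
Q(t,x,u) = r(x,u,G_t) + Σ_{x'} P(x'|x,u,G_t) max_{u'} Q(t+1,x',u'). -/
noncomputable def Qfun [Fintype 𝒳] [Fintype 𝒰] [Nonempty 𝒰] (r : 𝒳 → 𝒰 → (𝒳 → ℝ) → ℝ)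
    (P : 𝒳 → 𝒰 → (𝒳 → ℝ) → 𝒳 → ℝ) (G : ℕ → 𝒳 → ℝ) : ℕ → ℕ → 𝒳 → 𝒰 → ℝ
  | 0 => fun _ _ _ => 0
  | (k+1) => fun t x u => r x u (G t) + ∑ x', P x u (G t) x' *
      Finset.univ.sup' Finset.univ_nonempty (fun u' => Qfun r P G k (t+1) x' u')

/-- The Boltzmann (softmax) policy Φ̂_η(𝛍) of the M equivalence classes method with
horizon T, temperature η and block mean field ν. -/
noncomputable def boltzmann [Fintype 𝒳] [Fintype 𝒰] [Nonempty 𝒰] (T : ℕ) (η : ℝ)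
    (r : 𝒳 → 𝒰 → (𝒳 → ℝ) → ℝ) (P : 𝒳 → 𝒰 → (𝒳 → ℝ) → 𝒳 → ℝ) (W : ℝ → ℝ → ℝ) {M : ℕ}
    (ν : ℕ → Fin M → 𝒳 → ℝ) : Fin M → ℕ → 𝒳 → 𝒰 → ℝ :=
  fun m t x u =>
    Real.exp (Qfun r P (fun s => approxNbhd W (ν s) m) (T - t) t x u / η) /
      ∑ u' : 𝒰, Real.exp (Qfun r P (fun s => approxNbhd W (ν s) m) (T - t) t x u' / η)

/-- One step 𝛍 ↦ Ψ̂(Φ̂_η(𝛍)) of the Boltzmann fixed point iteration. -/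
noncomputable def boltzIter [Fintype 𝒳] [Fintype 𝒰] [Nonempty 𝒰] (T : ℕ) (η : ℝ)
    (r : 𝒳 → 𝒰 → (𝒳 → ℝ) → ℝ) (P : 𝒳 → 𝒰 → (𝒳 → ℝ) → 𝒳 → ℝ) (W : ℝ → ℝ → ℝ) (μ0 : 𝒳 → ℝ)
    {M : ℕ} (ν : ℕ → Fin M → 𝒳 → ℝ) : ℕ → Fin M → 𝒳 → ℝ :=
  fun t => approxMF W P μ0 (boltzmann T η r P W ν) t

/-!
Replace every agent by an independent mean-field agent facing the field of its class. If, on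
average over the agents, the fields of these independent agents are close to the predicted ones,
then the true state of the `N` agents stays concentrated around their laws: each time step adds
only fluctuations of order `√N` and errors proportional to those already made. A single deviating
agent changes every field by at most `2 / N`, so its payoff is close to the payoff of the same
policy in the mean-field problem, for which the policy of its class is optimal.

The predicted fields are correct on average because the `L∞ → L¹` bound may be tested on step
functions and `W` is Lipschitz; by Markov's inequality they are then correct for all but a
fraction `p` of the agents.
-/

section Expectation

variable {Ω : Type*} [Fintype Ω]

/-- The expectation of `f` under the mass function `q`. -/
noncomputable def expect (q f : Ω → ℝ) : ℝ := ∑ ω, q ω * f ω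

lemma expect_add (q f g : Ω → ℝ) :
    expect q (fun ω => f ω + g ω) = expect q f + expect q g :=
  dotProduct_add q f g

lemma expect_sub (q f g : Ω → ℝ) :
    expect q (fun ω => f ω - g ω) = expect q f - expect q g :=
  dotProduct_sub q f g

lemma expect_const_mul (q : Ω → ℝ) (c : ℝ) (f : Ω → ℝ) :
    expect q (fun ω => c * f ω) = c * expect q f :=
  dotProduct_smul c q f

lemma expect_sum {ι : Type*} (s : Finset ι) (q : Ω → ℝ) (f : ι → Ω → ℝ) :
    expect q (fun ω => ∑ i ∈ s, f i ω) = ∑ i ∈ s, expect q (f i) := by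
  simp only [expect, Finset.mul_sum]
  exact Finset.sum_comm

lemma expect_const {q : Ω → ℝ} (hq : q ∈ simplex Ω) (c : ℝ) : expect q (fun _ => c) = c := by
  rw [expect, ← Finset.sum_mul, hq.2, one_mul]

lemma expect_mono {q f g : Ω → ℝ} (hq : q ∈ simplex Ω) (h : ∀ ω, f ω ≤ g ω) :
    expect q f ≤ expect q g :=
  Finset.sum_le_sum fun ω _ => mul_le_mul_of_nonneg_left (h ω) (hq.1 ω)

lemma abs_expect_sub_le {q f g h : Ω → ℝ} (hq : q ∈ simplex Ω)
    (hfg : ∀ ω, |f ω - g ω| ≤ h ω) : |expect q f - expect q g| ≤ expect q h := by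
  rw [← expect_sub]
  refine (Finset.abs_sum_le_sum_abs _ _).trans (Finset.sum_le_sum fun ω _ => ?_)
  rw [abs_mul, abs_of_nonneg (hq.1 ω)]
  exact mul_le_mul_of_nonneg_left (hfg ω) (hq.1 ω)

lemma abs_expect_le {q f : Ω → ℝ} {C : ℝ} (hq : q ∈ simplex Ω) (hf : ∀ ω, |f ω| ≤ C) :
    |expect q f| ≤ C := by
  simpa [expect_const hq] using
    abs_expect_sub_le (g := fun _ => 0) (h := fun _ => C) hq (by simpa using hf)

lemma abs_expect_sub_expect_le {f : Ω → ℝ} {C : ℝ} (hf : ∀ ω, |f ω| ≤ C) (q q' : Ω → ℝ) :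
    |expect q f - expect q' f| ≤ C * l1dist q q' := by
  simp only [expect, l1dist, ← Finset.sum_sub_distrib, ← sub_mul, Finset.mul_sum]
  refine (Finset.abs_sum_le_sum_abs _ _).trans (Finset.sum_le_sum fun ω _ => ?_)
  rw [abs_mul, mul_comm]
  exact mul_le_mul_of_nonneg_right (hf ω) (abs_nonneg _)

lemma expect_abs_le_sqrt {q : Ω → ℝ} (hq : q ∈ simplex Ω) (f : Ω → ℝ) :
    expect q (fun ω => |f ω|) ≤ √(expect q fun ω => f ω ^ 2) := by
  refine Real.le_sqrt_of_sq_le ?_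
  simpa only [expect, sq_abs] using Real.pow_arith_mean_le_arith_mean_pow_of_even Finset.univ q
    (fun ω => |f ω|) (fun ω _ => hq.1 ω) hq.2 even_two

lemma expect_sq_sub_expect_le_one {q f : Ω → ℝ} (hq : q ∈ simplex Ω) (hf : ∀ y, |f y| ≤ 1) :
    expect q (fun y => (f y - expect q f) ^ 2) ≤ 1 := by
  have h_sq : expect q (fun y => f y ^ 2) ≤ 1 :=
    (expect_mono hq fun y => (sq_le_one_iff_abs_le_one _).2 (hf y)).trans (expect_const hq 1).le
  calc expect q (fun y => (f y - expect q f) ^ 2)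
      = expect q fun y => (f y ^ 2 + expect q f ^ 2) - 2 * expect q f * f y := by
        congr 1; funext y; ring
    _ = expect q (fun y => f y ^ 2) - expect q f ^ 2 := by
        rw [expect_sub, expect_add, expect_const hq, expect_const_mul]; ring
    _ ≤ 1 := by linarith [sq_nonneg (expect q f)]

end Expectation

section Mixture

variable {Ω Ω' : Type*} [Fintype Ω] [Fintype Ω']

lemma l1dist_nonneg (ν ν' : Ω → ℝ) : 0 ≤ l1dist ν ν' :=
  Finset.sum_nonneg fun _ _ => abs_nonneg _

lemma l1dist_triangle (ν₁ ν₂ ν₃ : Ω → ℝ) : l1dist ν₁ ν₃ ≤ l1dist ν₁ ν₂ + l1dist ν₂ ν₃ := by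
  simp only [l1dist, ← Finset.sum_add_distrib]
  exact Finset.sum_le_sum fun _ _ => abs_sub_le _ _ _

lemma l1dist_le_two {ν ν' : Ω → ℝ} (hν : ν ∈ simplex Ω) (hν' : ν' ∈ simplex Ω) :
    l1dist ν ν' ≤ 2 :=
  calc l1dist ν ν' ≤ ∑ ω, (ν ω + ν' ω) := Finset.sum_le_sum fun ω _ =>
        abs_sub_le_of_nonneg_of_le (hν.1 ω) (le_add_of_nonneg_right (hν'.1 ω)) (hν'.1 ω)
          (le_add_of_nonneg_left (hν.1 ω))
    _ = 2 := by rw [Finset.sum_add_distrib, hν.2, hν'.2, one_add_one_eq_two]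

lemma abs_apply_le_one {ν : Ω → ℝ} (hν : ν ∈ simplex Ω) (ω : Ω) : |ν ω| ≤ 1 := by
  rw [abs_of_nonneg (hν.1 ω), ← hν.2]
  exact Finset.single_le_sum (fun ω _ => hν.1 ω) (Finset.mem_univ ω)

/-- The image of the law `q` under the transition kernel `k`: every law of the model is obtained
from the initial one by iterating this operation. -/
noncomputable def mixture (q : Ω → ℝ) (k : Ω → Ω' → ℝ) : Ω' → ℝ := fun y => ∑ ω, q ω * k ω y

lemma expect_mixture (q : Ω → ℝ) (k : Ω → Ω' → ℝ) (f : Ω' → ℝ) :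
    expect (mixture q k) f = expect q fun ω => expect (k ω) f := by
  simp only [expect, mixture, Finset.sum_mul, Finset.mul_sum, mul_assoc]
  exact Finset.sum_comm

lemma mixture_mem_simplex {q : Ω → ℝ} {k : Ω → Ω' → ℝ} (hq : q ∈ simplex Ω)
    (hk : ∀ ω, k ω ∈ simplex Ω') : mixture q k ∈ simplex Ω' := by
  refine ⟨fun y => Finset.sum_nonneg fun ω _ => mul_nonneg (hq.1 ω) ((hk ω).1 y), ?_⟩
  have h_mass := expect_mixture q k fun _ => 1
  simp only [expect_const (hk _), expect_const hq] at h_mass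
  simpa only [expect, mul_one] using h_mass

lemma l1dist_mixture_le {q : Ω → ℝ} (hq : q ∈ simplex Ω) (k k' : Ω → Ω' → ℝ) :
    l1dist (mixture q k) (mixture q k') ≤ expect q fun ω => l1dist (k ω) (k' ω) := by
  simp only [l1dist, expect_sum]
  exact Finset.sum_le_sum fun y _ => abs_expect_sub_le hq fun ω => le_rfl

end Mixture

section ProductLaw

variable {ι Ω : Type*} [Fintype ι] [Fintype Ω] {q : ι → Ω → ℝ}

/-- The joint law of independent random variables with laws `q i`. -/
noncomputable def prodLaw (q : ι → Ω → ℝ) : (ι → Ω) → ℝ := fun Y => ∏ i, q i (Y i)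

variable [DecidableEq ι]

lemma expect_prodLaw_prod (q g : ι → Ω → ℝ) :
    expect (prodLaw q) (fun Y => ∏ i, g i (Y i)) = ∏ i, expect (q i) (g i) := by
  simp only [expect, prodLaw, ← Finset.prod_mul_distrib, Fintype.prod_sum]

lemma prodLaw_mem_simplex (hq : ∀ i, q i ∈ simplex Ω) : prodLaw q ∈ simplex (ι → Ω) := by
  refine ⟨fun Y => Finset.prod_nonneg fun i _ => (hq i).1 _, ?_⟩
  simpa [expect, (hq _).2] using expect_prodLaw_prod q fun _ _ => 1

lemma expect_prodLaw_apply (hq : ∀ i, q i ∈ simplex Ω) (j : ι) (g : Ω → ℝ) :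
    expect (prodLaw q) (fun Y => g (Y j)) = expect (q j) g := by
  have h := expect_prodLaw_prod q fun i y => if i = j then g y else 1
  simp only [Finset.prod_ite_eq', Finset.mem_univ, if_true] at h
  rw [h, Fintype.prod_eq_single j fun i hij => by simp [hij, expect_const (hq i)]]
  simp

lemma expect_prodLaw_mul (hq : ∀ i, q i ∈ simplex Ω) {j k : ι} (hjk : j ≠ k) (g g' : Ω → ℝ) :
    expect (prodLaw q) (fun Y => g (Y j) * g' (Y k)) = expect (q j) g * expect (q k) g' := by
  have h := expect_prodLaw_prod q fun i y => (if i = j then g y else 1) * if i = k then g' y else 1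
  simp only [Finset.prod_mul_distrib, Finset.prod_ite_eq', Finset.mem_univ, if_true] at h
  rw [h, Fintype.prod_eq_mul j k hjk fun i hi => by simp [hi.1, hi.2, expect_const (hq i)]]
  simp [hjk, hjk.symm]

lemma expect_prodLaw_sum_sq (hq : ∀ i, q i ∈ simplex Ω) {f : ι → Ω → ℝ}
    (hf : ∀ j, expect (q j) (f j) = 0) :
    expect (prodLaw q) (fun Y => (∑ j, f j (Y j)) ^ 2) =
      ∑ j, expect (q j) fun y => f j y ^ 2 := by
  simp only [sq, Finset.sum_mul_sum, expect_sum]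
  refine Finset.sum_congr rfl fun j _ => ?_
  rw [Fintype.sum_eq_single j fun k hkj => by rw [expect_prodLaw_mul hq hkj.symm, hf, zero_mul]]
  exact expect_prodLaw_apply hq j fun y => f j y * f j y

/-- Deviations of `∑ j, f j (X j)` from its mean-field value, for `X` distributed according to
`q` and test functions `|f j| ≤ 1`, are at most `D` in mean. The sum is not divided by the number
of coordinates, so `D` of smaller order than that number expresses a law of large numbers. -/
def ConcentratesAround (q : (ι → Ω) → ℝ) (ν : ι → Ω → ℝ) (D : ℝ) : Prop :=
  ∀ f : ι → Ω → ℝ, (∀ j y, |f j y| ≤ 1) →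
    expect q (fun X => |∑ j, (f j (X j) - expect (ν j) (f j))|) ≤ D

lemma concentratesAround_prodLaw (hq : ∀ i, q i ∈ simplex Ω) :
    ConcentratesAround (prodLaw q) q √(Fintype.card ι) := by
  intro f hf
  have h_centred : ∀ j, expect (q j) (fun y => f j y - expect (q j) (f j)) = 0 := fun j => by
    rw [expect_sub, expect_const (hq j), sub_self]
  refine (expect_abs_le_sqrt (prodLaw_mem_simplex hq) _).trans (Real.sqrt_le_sqrt ?_)
  rw [expect_prodLaw_sum_sq hq h_centred]
  simpa using Finset.sum_le_sum fun j (_ : j ∈ Finset.univ) =>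
    expect_sq_sub_expect_le_one (hq j) (hf j)

/-- One step of propagation of chaos: the next state fluctuates by `√N` around its conditional
mean, replacing the interacting kernels by the mean-field ones costs their `L¹` distance, and the
rest is the concentration of the current state. -/
lemma ConcentratesAround.mixture_prodLaw {q : (ι → Ω) → ℝ} {ν : ι → Ω → ℝ} {D : ℝ}
    {k : ι → (ι → Ω) → Ω → ℝ} {k' : ι → Ω → Ω → ℝ} (hq : q ∈ simplex (ι → Ω))
    (hk : ∀ j X, k j X ∈ simplex Ω) (hk' : ∀ j x, k' j x ∈ simplex Ω)
    (h : ConcentratesAround q ν D) :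
    ConcentratesAround (mixture q fun X => prodLaw fun j => k j X)
      (fun j => mixture (ν j) (k' j))
      (√(Fintype.card ι) + ∑ j, expect q (fun X => l1dist (k j X) (k' j (X j))) + D) := by
  intro f hf
  set m : ι → Ω → ℝ := fun j x => expect (k' j x) (f j)
  have hm : ∀ j x, |m j x| ≤ 1 := fun j x => abs_expect_le (hk' j x) (hf j)
  have h_step : ∀ X, expect (prodLaw fun j => k j X)
      (fun Y => |∑ j, (f j (Y j) - expect (mixture (ν j) (k' j)) (f j))|) ≤
      √(Fintype.card ι) + ∑ j, l1dist (k j X) (k' j (X j)) +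
        |∑ j, (m j (X j) - expect (ν j) (m j))| := by
    intro X
    have hX : prodLaw (fun j => k j X) ∈ simplex (ι → Ω) := prodLaw_mem_simplex fun j => hk j X
    have h_kernel : |∑ j, (expect (k j X) (f j) - m j (X j))| ≤
        ∑ j, l1dist (k j X) (k' j (X j)) :=
      (Finset.abs_sum_le_sum_abs _ _).trans <| Finset.sum_le_sum fun j _ => by
        simpa using abs_expect_sub_expect_le (hf j) (k j X) (k' j (X j))
    have h_split : ∀ Y : ι → Ω, |∑ j, (f j (Y j) - expect (mixture (ν j) (k' j)) (f j))| ≤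
        |∑ j, (f j (Y j) - expect (k j X) (f j))| + (∑ j, l1dist (k j X) (k' j (X j)) +
          |∑ j, (m j (X j) - expect (ν j) (m j))|) := by
      intro Y
      refine le_trans (le_of_eq ?_) ((abs_add_three _ _ _).trans
        (by rw [add_assoc]; exact add_le_add_right (add_le_add_left h_kernel _) _))
      simp only [expect_mixture, ← Finset.sum_add_distrib, sub_add_sub_cancel, m]
    refine (expect_mono hX h_split).trans ?_
    rw [expect_add, expect_const hX, ← add_assoc]
    gcongr
    exact concentratesAround_prodLaw (fun j => hk j X) f hf
  rw [expect_mixture]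
  refine (expect_mono hq h_step).trans ?_
  rw [expect_add, expect_add, expect_const hq, expect_sum]
  exact add_le_add_right (h m hm) _

end ProductLaw

section Neighborhood

variable [Fintype 𝒳] {N : ℕ}

/-- The neighborhood field `N⁻¹ ∑ₖ wᵢₖ νₖ` of vertex `i` in a weighted graph. It specializes by
definitional unfolding to `empNbhd` (Dirac masses) and to `approxNbhd` (weights sampled from a
graphon). -/
noncomputable def graphNbhd (w : Fin N → Fin N → ℝ) (ν : Fin N → 𝒳 → ℝ) (i : Fin N) : 𝒳 → ℝ :=
  fun x => (N : ℝ)⁻¹ * ∑ k, w i k * ν k x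

lemma graphNbhd_mem_subProb {w : Fin N → Fin N → ℝ} (hw : ∀ i k, w i k ∈ Set.Icc (0 : ℝ) 1)
    {ν : Fin N → 𝒳 → ℝ} (hν : ∀ k, ν k ∈ simplex 𝒳) (i : Fin N) :
    graphNbhd w ν i ∈ subProb 𝒳 := by
  refine ⟨fun x => mul_nonneg (by positivity) <| Finset.sum_nonneg fun k _ =>
    mul_nonneg (hw i k).1 ((hν k).1 x), ?_⟩
  calc ∑ x, graphNbhd w ν i x = (N : ℝ)⁻¹ * ∑ k, w i k := by
        simp only [graphNbhd, ← Finset.mul_sum]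
        rw [Finset.sum_comm]
        simp only [← Finset.mul_sum, (hν _).2, mul_one]
    _ ≤ (N : ℝ)⁻¹ * N := by
        gcongr
        simpa using Finset.sum_le_sum fun k (_ : k ∈ Finset.univ) => (hw i k).2
    _ ≤ 1 := inv_mul_le_one

lemma l1dist_graphNbhd_le {w : Fin N → Fin N → ℝ} (hw : ∀ i k, w i k ∈ Set.Icc (0 : ℝ) 1)
    (ν ν' : Fin N → 𝒳 → ℝ) (i : Fin N) :
    l1dist (graphNbhd w ν i) (graphNbhd w ν' i) ≤ (N : ℝ)⁻¹ * ∑ k, l1dist (ν k) (ν' k) := by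
  simp only [l1dist, graphNbhd, ← mul_sub, ← Finset.sum_sub_distrib]
  rw [Finset.sum_comm, Finset.mul_sum]
  refine Finset.sum_le_sum fun x _ => ?_
  rw [abs_mul, abs_of_nonneg (by positivity : (0 : ℝ) ≤ (N : ℝ)⁻¹)]
  gcongr
  refine (Finset.abs_sum_le_sum_abs _ _).trans (Finset.sum_le_sum fun k _ => ?_)
  rw [abs_mul, abs_of_nonneg (hw i k).1]
  exact mul_le_of_le_one_left (abs_nonneg _) (hw i k).2

variable [DecidableEq 𝒳]

lemma empNbhd_mem_subProb {ξ : Fin N → Fin N → ℝ} (hξ : ∀ i k, ξ i k ∈ Set.Icc (0 : ℝ) 1)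
    (X : Fin N → 𝒳) (i : Fin N) : empNbhd ξ X i ∈ subProb 𝒳 :=
  graphNbhd_mem_subProb (ν := fun k x => if X k = x then 1 else 0) hξ
    (fun k => ⟨fun x => by positivity, by simp⟩) i

lemma ConcentratesAround.expect_l1dist_empNbhd_le {q : (Fin N → 𝒳) → ℝ} {ν : Fin N → 𝒳 → ℝ}
    {D : ℝ} {ξ : Fin N → Fin N → ℝ} (hq : q ∈ simplex (Fin N → 𝒳))
    (hξ : ∀ i k, ξ i k ∈ Set.Icc (0 : ℝ) 1) (h : ConcentratesAround q ν D) (i : Fin N)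
    (G : 𝒳 → ℝ) :
    expect q (fun X => l1dist (empNbhd ξ X i) G) ≤
      Fintype.card 𝒳 * D / N + l1dist (graphNbhd ξ ν i) G := by
  have h_point : ∀ x, expect q (fun X => |empNbhd ξ X i x - graphNbhd ξ ν i x|) ≤
      (N : ℝ)⁻¹ * D := by
    intro x
    let f : Fin N → 𝒳 → ℝ := fun k y => ξ i k * if y = x then 1 else 0
    have hf : ∀ k y, |f k y| ≤ 1 := fun k y => by
      dsimp only [f]
      split_ifs <;> simp [abs_of_nonneg (hξ i k).1, (hξ i k).2]
    have h_eq : ∀ X : Fin N → 𝒳, |empNbhd ξ X i x - graphNbhd ξ ν i x| =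
        (N : ℝ)⁻¹ * |∑ k, (f k (X k) - expect (ν k) (f k))| := fun X => by
      rw [← abs_of_nonneg (by positivity : (0 : ℝ) ≤ (N : ℝ)⁻¹), ← abs_mul]
      simp [f, empNbhd, graphNbhd, expect, ← mul_sub, mul_comm]
    simp only [h_eq, expect_const_mul]
    exact mul_le_mul_of_nonneg_left (h f hf) (by positivity)
  refine (expect_mono hq fun X => l1dist_triangle _ (graphNbhd ξ ν i) _).trans ?_
  rw [expect_add, expect_const hq]
  gcongr
  simp only [l1dist, expect_sum]
  refine (Finset.sum_le_sum fun x _ => h_point x).trans (le_of_eq ?_)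
  rw [Finset.sum_const, Finset.card_univ, nsmul_eq_mul]
  ring

end Neighborhood

section Dynamics

variable [Fintype 𝒳] [Fintype 𝒰] {P : 𝒳 → 𝒰 → (𝒳 → ℝ) → 𝒳 → ℝ} {μ0 : 𝒳 → ℝ} {LP : ℝ}

lemma KernelLipschitz.mono {L L' : ℝ} (h : KernelLipschitz P L) (hL : L ≤ L') :
    KernelLipschitz P L' := fun x u ν ν' hν hν' =>
  (h x u ν ν' hν hν').trans (mul_le_mul_of_nonneg_right hL (l1dist_nonneg ν ν'))

lemma RewardLipschitz.mono {r : 𝒳 → 𝒰 → (𝒳 → ℝ) → ℝ} {L L' : ℝ} (h : RewardLipschitz r L)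
    (hL : L ≤ L') : RewardLipschitz r L' := fun x u ν ν' hν hν' =>
  (h x u ν ν' hν hν').trans (mul_le_mul_of_nonneg_right hL (l1dist_nonneg ν ν'))

lemma exists_reward_bound {r : 𝒳 → 𝒰 → (𝒳 → ℝ) → ℝ} {Lr : ℝ} (hrLip : RewardLipschitz r Lr) :
    ∃ R, 0 ≤ R ∧ ∀ x u ν, ν ∈ subProb 𝒳 → |r x u ν| ≤ R := by
  have h_zero : ∀ x u, |r x u 0| ≤ ∑ x, ∑ u, |r x u 0| := fun x u =>
    (Finset.single_le_sum (f := fun u => |r x u 0|) (fun _ _ => abs_nonneg _)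
      (Finset.mem_univ u)).trans <|
    Finset.single_le_sum (f := fun x => ∑ u, |r x u 0|)
      (fun _ _ => Finset.sum_nonneg fun _ _ => abs_nonneg _) (Finset.mem_univ x)
  refine ⟨|Lr| + ∑ x, ∑ u, |r x u 0|, by positivity, fun x u ν hν => ?_⟩
  have h_mass : l1dist ν 0 ≤ 1 := by
    simpa [l1dist, abs_of_nonneg (hν.1 _)] using hν.2
  have h_lip : |r x u ν - r x u 0| ≤ |Lr| :=
    (hrLip.mono (le_abs_self Lr) x u ν 0 hν ⟨fun _ => le_rfl, by simp⟩).trans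
      (mul_le_of_le_one_right (abs_nonneg Lr) h_mass)
  calc |r x u ν| = |(r x u ν - r x u 0) + r x u 0| := by rw [sub_add_cancel]
    _ ≤ _ := (abs_add_le _ _).trans (add_le_add h_lip (h_zero x u))

/-- The law of the next state of an agent in state `x` at time `t`, playing the policy `π` and
facing the neighborhood field `ν`. -/
noncomputable def stepLaw (P : 𝒳 → 𝒰 → (𝒳 → ℝ) → 𝒳 → ℝ) (π : ℕ → 𝒳 → 𝒰 → ℝ) (t : ℕ)
    (ν : 𝒳 → ℝ) (x : 𝒳) : 𝒳 → ℝ :=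
  mixture (π t x) fun u => P x u ν

lemma stepLaw_mem_simplex (hP : IsKernel P) {π : ℕ → 𝒳 → 𝒰 → ℝ} (hπ : IsPolicy π) {ν : 𝒳 → ℝ}
    (hν : ν ∈ subProb 𝒳) (t : ℕ) (x : 𝒳) : stepLaw P π t ν x ∈ simplex 𝒳 :=
  mixture_mem_simplex (hπ t x) fun u => hP x u ν hν

lemma l1dist_stepLaw_le (hPLip : KernelLipschitz P LP) {π : ℕ → 𝒳 → 𝒰 → ℝ} (hπ : IsPolicy π)
    {ν ν' : 𝒳 → ℝ} (hν : ν ∈ subProb 𝒳) (hν' : ν' ∈ subProb 𝒳) (t : ℕ) (x : 𝒳) :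
    l1dist (stepLaw P π t ν x) (stepLaw P π t ν' x) ≤ LP * l1dist ν ν' := by
  refine (l1dist_mixture_le (hπ t x) _ _).trans ?_
  refine (expect_mono (hπ t x) fun u => hPLip x u ν ν' hν hν').trans (le_of_eq ?_)
  exact expect_const (hπ t x) _

lemma stateLaw_mem_simplex (hP : IsKernel P) (hμ0 : μ0 ∈ simplex 𝒳) {π : ℕ → 𝒳 → 𝒰 → ℝ}
    (hπ : IsPolicy π) {G : ℕ → 𝒳 → ℝ} (hG : ∀ t, G t ∈ subProb 𝒳) :
    ∀ t, stateLaw P μ0 G π t ∈ simplex 𝒳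
  | 0 => hμ0
  | t + 1 => mixture_mem_simplex (stateLaw_mem_simplex hP hμ0 hπ hG t)
      (stepLaw_mem_simplex hP hπ (hG t) t)

variable {N : ℕ} {ξ : Fin N → Fin N → ℝ} {πs : Fin N → ℕ → 𝒳 → 𝒰 → ℝ}

/-- The error made at agent `i` and time `t` when its neighborhood field is predicted to be
`G i t`, every agent `k` being replaced by an independent mean-field agent facing `G k`. -/
noncomputable def fieldGap (P : 𝒳 → 𝒰 → (𝒳 → ℝ) → 𝒳 → ℝ) (μ0 : 𝒳 → ℝ) (ξ : Fin N → Fin N → ℝ)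
    (πs : Fin N → ℕ → 𝒳 → 𝒰 → ℝ) (G : Fin N → ℕ → 𝒳 → ℝ) (t : ℕ) (i : Fin N) : ℝ :=
  l1dist (graphNbhd ξ (fun k => stateLaw P μ0 (G k) (πs k) t) i) (G i t)

lemma fieldGap_update_le (hP : IsKernel P) (hμ0 : μ0 ∈ simplex 𝒳)
    (hξ : ∀ i k, ξ i k ∈ Set.Icc (0 : ℝ) 1) {G : Fin N → ℕ → 𝒳 → ℝ}
    (hG : ∀ i t, G i t ∈ subProb 𝒳) (hπs : ∀ i, IsPolicy (πs i)) {πd : ℕ → 𝒳 → 𝒰 → ℝ}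
    (hπd : IsPolicy πd) (t : ℕ) (i j : Fin N) :
    fieldGap P μ0 ξ (Function.update πs i πd) G t j ≤ fieldGap P μ0 ξ πs G t j + 2 / N := by
  have h_own : ∑ k, l1dist (stateLaw P μ0 (G k) (Function.update πs i πd k) t)
      (stateLaw P μ0 (G k) (πs k) t) ≤ 2 := by
    rw [Fintype.sum_eq_single i fun k hk => by simp [hk, l1dist], Function.update_self]
    exact l1dist_le_two (stateLaw_mem_simplex hP hμ0 hπd (hG i) t)
      (stateLaw_mem_simplex hP hμ0 (hπs i) (hG i) t)
  calc _ ≤ (N : ℝ)⁻¹ * 2 + fieldGap P μ0 ξ πs G t j :=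
        (l1dist_triangle _ _ _).trans <| add_le_add_left
          ((l1dist_graphNbhd_le hξ _ _ j).trans (by gcongr)) _
    _ = _ := by rw [inv_mul_eq_div, add_comm]

variable [DecidableEq 𝒳]

lemma jointLaw_mem_simplex (hP : IsKernel P) (hμ0 : μ0 ∈ simplex 𝒳)
    (hξ : ∀ i k, ξ i k ∈ Set.Icc (0 : ℝ) 1) (hπs : ∀ i, IsPolicy (πs i)) :
    ∀ t, jointLaw P μ0 ξ πs t ∈ simplex (Fin N → 𝒳)
  | 0 => prodLaw_mem_simplex fun _ => hμ0
  | t + 1 => mixture_mem_simplex (jointLaw_mem_simplex hP hμ0 hξ hπs t) fun X =>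
      prodLaw_mem_simplex fun i =>
        stepLaw_mem_simplex hP (hπs i) (empNbhd_mem_subProb hξ X i) t (X i)

lemma expect_l1dist_stepLaw_le (hPLip : KernelLipschitz P LP)
    (hξ : ∀ i k, ξ i k ∈ Set.Icc (0 : ℝ) 1) {q : (Fin N → 𝒳) → ℝ} (hq : q ∈ simplex (Fin N → 𝒳))
    {i : Fin N} {π : ℕ → 𝒳 → 𝒰 → ℝ} (hπ : IsPolicy π) {ν : 𝒳 → ℝ} (hν : ν ∈ subProb 𝒳) (t : ℕ) :
    expect q (fun X => l1dist (stepLaw P π t (empNbhd ξ X i) (X i)) (stepLaw P π t ν (X i))) ≤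
      LP * expect q fun X => l1dist (empNbhd ξ X i) ν := by
  rw [← expect_const_mul]
  exact expect_mono hq fun X =>
    l1dist_stepLaw_le hPLip hπ (empNbhd_mem_subProb hξ X i) hν t (X i)

lemma jointLaw_concentratesAround (hP : IsKernel P) (hμ0 : μ0 ∈ simplex 𝒳) (hLP : 0 ≤ LP)
    (hPLip : KernelLipschitz P LP) (hξ : ∀ i k, ξ i k ∈ Set.Icc (0 : ℝ) 1)
    (hπs : ∀ i, IsPolicy (πs i)) {G : Fin N → ℕ → 𝒳 → ℝ} (hG : ∀ i t, G i t ∈ subProb 𝒳) {κ : ℝ}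
    (hN : √N ≤ κ) (t : ℕ) (hκ : ∀ s < t, ∑ i, fieldGap P μ0 ξ πs G s i ≤ κ) :
    ConcentratesAround (jointLaw P μ0 ξ πs t) (fun i => stateLaw P μ0 (G i) (πs i) t)
      ((2 + LP + LP * Fintype.card 𝒳) ^ t * κ) := by
  induction t with
  | zero =>
    intro f hf
    have h := concentratesAround_prodLaw (fun _ : Fin N => hμ0) f hf
    rw [Fintype.card_fin] at h
    rw [pow_zero, one_mul]
    exact h.trans hN
  | succ t ih =>
    set D := (2 + LP + LP * Fintype.card 𝒳) ^ t * κ with hD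
    have hκ0 : 0 ≤ κ := (Real.sqrt_nonneg _).trans hN
    have hκD : κ ≤ D := le_mul_of_one_le_left hκ0 <| one_le_pow₀ <| by
      linarith [mul_nonneg hLP (Nat.cast_nonneg (α := ℝ) (Fintype.card 𝒳))]
    have ih := ih fun s hs => hκ s (by omega)
    have hq := jointLaw_mem_simplex hP hμ0 hξ hπs t
    have h_kernel : ∀ i, expect (jointLaw P μ0 ξ πs t) (fun X => l1dist
        (stepLaw P (πs i) t (empNbhd ξ X i) (X i)) (stepLaw P (πs i) t (G i t) (X i))) ≤
        LP * (Fintype.card 𝒳 * D / N + fieldGap P μ0 ξ πs G t i) := fun i =>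
      (expect_l1dist_stepLaw_le hPLip hξ hq (hπs i) (hG i t) t).trans
        (mul_le_mul_of_nonneg_left (ih.expect_l1dist_empNbhd_le hq hξ i (G i t)) hLP)
    have h_sum : ∑ i : Fin N, LP * (Fintype.card 𝒳 * D / N + fieldGap P μ0 ξ πs G t i) ≤
        LP * (Fintype.card 𝒳 * D + κ) := by
      have hD0 : 0 ≤ Fintype.card 𝒳 * D := mul_nonneg (Nat.cast_nonneg _) (hκ0.trans hκD)
      have h_card : N * (Fintype.card 𝒳 * D / N) ≤ Fintype.card 𝒳 * D := by
        rw [mul_div_left_comm]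
        exact mul_le_of_le_one_right hD0 (div_self_le_one _)
      rw [← Finset.mul_sum, Finset.sum_add_distrib, Finset.sum_const, Finset.card_fin,
        nsmul_eq_mul]
      exact mul_le_mul_of_nonneg_left (add_le_add h_card (hκ t t.lt_succ_self)) hLP
    intro f hf
    refine (ih.mixture_prodLaw hq
      (k := fun i X => stepLaw P (πs i) t (empNbhd ξ X i) (X i))
      (k' := fun i x => stepLaw P (πs i) t (G i t) x)
      (fun i X => stepLaw_mem_simplex hP (hπs i) (empNbhd_mem_subProb hξ X i) t (X i))
      (fun i x => stepLaw_mem_simplex hP (hπs i) (hG i t) t x) f hf).trans ?_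
    rw [Fintype.card_fin]
    calc √N + _ + D ≤ D + LP * (Fintype.card 𝒳 * D + D) + D := by
          gcongr
          · exact hN.trans hκD
          · exact (Finset.sum_le_sum fun i _ => h_kernel i).trans (h_sum.trans (by gcongr))
      _ = (2 + LP + LP * Fintype.card 𝒳) ^ (t + 1) * κ := by rw [hD]; ring

section Payoff

variable {r : 𝒳 → 𝒰 → (𝒳 → ℝ) → ℝ} {Lr R η : ℝ} {i : Fin N} {G : ℕ → 𝒳 → ℝ}

lemma abs_expect_jointLaw_sub_expect_stateLaw_le (hP : IsKernel P) (hμ0 : μ0 ∈ simplex 𝒳)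
    (hLP : 0 ≤ LP) (hPLip : KernelLipschitz P LP) (hξ : ∀ i k, ξ i k ∈ Set.Icc (0 : ℝ) 1)
    (hπs : ∀ i, IsPolicy (πs i)) (hG : ∀ t, G t ∈ subProb 𝒳) (t : ℕ)
    (hη : ∀ s < t, expect (jointLaw P μ0 ξ πs s) (fun X => l1dist (empNbhd ξ X i) (G s)) ≤ η)
    {f : 𝒳 → ℝ} {C : ℝ} (hC : 0 ≤ C) (hf : ∀ x, |f x| ≤ C) :
    |expect (jointLaw P μ0 ξ πs t) (fun X => f (X i)) - expect (stateLaw P μ0 G (πs i) t) f| ≤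
      C * (t * (LP * η)) := by
  induction t generalizing f with
  | zero =>
    have h := expect_prodLaw_apply (fun _ : Fin N => hμ0) i f
    simp [show expect (jointLaw P μ0 ξ πs 0) (fun X => f (X i)) = expect μ0 f from h, stateLaw]
  | succ t ih =>
    have hq := jointLaw_mem_simplex hP hμ0 hξ hπs t
    have h_joint : expect (jointLaw P μ0 ξ πs (t + 1)) (fun X => f (X i)) =
        expect (jointLaw P μ0 ξ πs t)
          fun X => expect (stepLaw P (πs i) t (empNbhd ξ X i) (X i)) f := by
      refine (expect_mixture _ _ _).trans (congrArg _ (funext fun X => ?_))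
      exact expect_prodLaw_apply (fun k =>
        stepLaw_mem_simplex hP (hπs k) (empNbhd_mem_subProb hξ X k) t (X k)) i f
    have h_state : expect (stateLaw P μ0 G (πs i) (t + 1)) f =
        expect (stateLaw P μ0 G (πs i) t) fun x => expect (stepLaw P (πs i) t (G t) x) f :=
      expect_mixture _ _ _
    have h_field := abs_expect_sub_le hq fun X => abs_expect_sub_expect_le hf
      (stepLaw P (πs i) t (empNbhd ξ X i) (X i)) (stepLaw P (πs i) t (G t) (X i))
    rw [expect_const_mul] at h_field
    have h_kernel := (expect_l1dist_stepLaw_le hPLip hξ hq (hπs i) (hG t) t).trans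
      (mul_le_mul_of_nonneg_left (hη t t.lt_succ_self) hLP)
    have h_past := ih (fun s hs => hη s (by omega))
      fun x => abs_expect_le (stepLaw_mem_simplex hP (hπs i) (hG t) t x) hf
    rw [h_joint, h_state]
    calc _ ≤ C * (LP * η) + C * (t * (LP * η)) := (abs_sub_le _ _ _).trans <|
          add_le_add (h_field.trans (mul_le_mul_of_nonneg_left h_kernel hC)) h_past
      _ = C * ((t + 1 : ℕ) * (LP * η)) := by push_cast; ring

lemma abs_expect_reward_sub_le (hrLip : RewardLipschitz r Lr)
    (hξ : ∀ i k, ξ i k ∈ Set.Icc (0 : ℝ) 1) {q : (Fin N → 𝒳) → ℝ} (hq : q ∈ simplex (Fin N → 𝒳))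
    {κ : 𝒳 → 𝒰 → ℝ} (hκ : ∀ x, κ x ∈ simplex 𝒰) {ν : 𝒳 → ℝ} (hν : ν ∈ subProb 𝒳) :
    |expect q (fun X => expect (κ (X i)) fun u => r (X i) u (empNbhd ξ X i)) -
      expect q (fun X => expect (κ (X i)) fun u => r (X i) u ν)| ≤
      Lr * expect q fun X => l1dist (empNbhd ξ X i) ν := by
  rw [← expect_const_mul]
  refine abs_expect_sub_le hq fun X => ?_
  refine (abs_expect_sub_le (hκ (X i)) fun u =>
    hrLip (X i) u _ _ (empNbhd_mem_subProb hξ X i) hν).trans (le_of_eq ?_)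
  exact expect_const (hκ (X i)) _

lemma abs_JN_sub_Jmf_le (hP : IsKernel P) (hμ0 : μ0 ∈ simplex 𝒳) (hLr : 0 ≤ Lr)
    (hrLip : RewardLipschitz r Lr) (hR0 : 0 ≤ R) (hR : ∀ x u ν, ν ∈ subProb 𝒳 → |r x u ν| ≤ R)
    (hLP : 0 ≤ LP) (hPLip : KernelLipschitz P LP) (hξ : ∀ i k, ξ i k ∈ Set.Icc (0 : ℝ) 1)
    (hπs : ∀ i, IsPolicy (πs i)) (hG : ∀ t, G t ∈ subProb 𝒳) {T : ℕ}
    (hη : ∀ t < T, expect (jointLaw P μ0 ξ πs t) (fun X => l1dist (empNbhd ξ X i) (G t)) ≤ η) :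
    |JN T r P μ0 ξ πs i - Jmf T r P μ0 G (πs i)| ≤ T * ((Lr + R * (T * LP)) * η) := by
  set g : ℕ → 𝒳 → (𝒳 → ℝ) → ℝ := fun t x ν => expect (πs i t x) fun u => r x u ν
  have h_term : ∀ t < T, |expect (jointLaw P μ0 ξ πs t) (fun X => g t (X i) (empNbhd ξ X i)) -
      expect (stateLaw P μ0 G (πs i) t) (fun x => g t x (G t))| ≤ (Lr + R * (T * LP)) * η := by
    intro t ht
    have hq := jointLaw_mem_simplex hP hμ0 hξ hπs t
    have h_reward := (abs_expect_reward_sub_le hrLip hξ hq (hπs i t) (hG t)).trans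
      (mul_le_mul_of_nonneg_left (hη t ht) hLr)
    have hη0 : 0 ≤ η := (hη t ht).trans' <| by
      simpa [expect_const hq] using expect_mono hq (f := fun _ => 0) fun X =>
        l1dist_nonneg (empNbhd ξ X i) (G t)
    have h_state := abs_expect_jointLaw_sub_expect_stateLaw_le hP hμ0 hLP hPLip hξ hπs hG t
      (fun s hs => hη s (hs.trans ht)) hR0
      (f := fun x => g t x (G t)) fun x => abs_expect_le (hπs i t x) fun u => hR x u _ (hG t)
    calc _ ≤ Lr * η + R * (t * (LP * η)) := (abs_sub_le _ _ _).trans (add_le_add h_reward h_state)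
      _ ≤ Lr * η + R * (T * (LP * η)) := by gcongr
      _ = (Lr + R * (T * LP)) * η := by ring
  calc |JN T r P μ0 ξ πs i - Jmf T r P μ0 G (πs i)|
      = |∑ t ∈ Finset.range T,
          (expect (jointLaw P μ0 ξ πs t) (fun X => g t (X i) (empNbhd ξ X i)) -
            expect (stateLaw P μ0 G (πs i) t) fun x => g t x (G t))| := by
        rw [Finset.sum_sub_distrib]; rfl
    _ ≤ ∑ _t ∈ Finset.range T, (Lr + R * (T * LP)) * η :=
        (Finset.abs_sum_le_sum_abs _ _).trans <|
          Finset.sum_le_sum fun t ht => h_term t (Finset.mem_range.1 ht)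
    _ = T * ((Lr + R * (T * LP)) * η) := by simp

end Payoff

section Deviation

variable {G : Fin N → ℕ → 𝒳 → ℝ} {πd : ℕ → 𝒳 → 𝒰 → ℝ} {i : Fin N}
  {r : 𝒳 → 𝒰 → (𝒳 → ℝ) → ℝ} {Lr R D η : ℝ} {T : ℕ}

lemma abs_JN_update_sub_Jmf_le (hP : IsKernel P) (hμ0 : μ0 ∈ simplex 𝒳) (hLr : 0 ≤ Lr)
    (hrLip : RewardLipschitz r Lr) (hR0 : 0 ≤ R) (hR : ∀ x u ν, ν ∈ subProb 𝒳 → |r x u ν| ≤ R)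
    (hLP : 0 ≤ LP) (hPLip : KernelLipschitz P LP) (hξ : ∀ i k, ξ i k ∈ Set.Icc (0 : ℝ) 1)
    (hπs : ∀ i, IsPolicy (πs i)) (hG : ∀ i t, G i t ∈ subProb 𝒳) (hN : √N ≤ D)
    (hD : ∀ t < T, ∑ j, fieldGap P μ0 ξ πs G t j + 2 ≤ D)
    (hη : ∀ t < T, fieldGap P μ0 ξ πs G t i ≤ η) (hπd : IsPolicy πd) :
    |JN T r P μ0 ξ (Function.update πs i πd) i - Jmf T r P μ0 (G i) πd| ≤
      T * ((Lr + R * (T * LP)) * (Fintype.card 𝒳 * ((2 + LP + LP * Fintype.card 𝒳) ^ T * D) / N +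
        (η + 2 / N))) := by
  set πs' := Function.update πs i πd
  have hπs' : ∀ k, IsPolicy (πs' k) := Function.forall_update_iff _ _ |>.2 ⟨hπd, fun k _ => hπs k⟩
  have hD0 : 0 ≤ D := (Real.sqrt_nonneg _).trans hN
  have h_base : 1 ≤ 2 + LP + LP * Fintype.card 𝒳 := by
    linarith [mul_nonneg hLP (Nat.cast_nonneg (α := ℝ) (Fintype.card 𝒳))]
  have h_gap := fun t => fieldGap_update_le hP hμ0 hξ hG hπs hπd t i
  have h_total : ∀ t < T, ∑ j, fieldGap P μ0 ξ πs' G t j ≤ D := fun t ht => by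
    refine (Finset.sum_le_sum fun j _ => h_gap t j).trans (le_trans ?_ (hD t ht))
    rw [Finset.sum_add_distrib, Finset.sum_const, Finset.card_fin, nsmul_eq_mul, mul_div_left_comm]
    gcongr
    exact mul_le_of_le_one_right zero_le_two (div_self_le_one _)
  have h_field : ∀ t < T, expect (jointLaw P μ0 ξ πs' t)
      (fun X => l1dist (empNbhd ξ X i) (G i t)) ≤
      Fintype.card 𝒳 * ((2 + LP + LP * Fintype.card 𝒳) ^ T * D) / N + (η + 2 / N) := by
    intro t ht
    have h_conc := jointLaw_concentratesAround hP hμ0 hLP hPLip hξ hπs' hG hN t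
      fun s hs => h_total s (hs.trans ht)
    refine (h_conc.expect_l1dist_empNbhd_le
      (jointLaw_mem_simplex hP hμ0 hξ hπs' t) hξ i (G i t)).trans (add_le_add ?_ ?_)
    · gcongr
    · exact (h_gap t i).trans (add_le_add_left (hη t ht) _)
  simpa [πs'] using abs_JN_sub_Jmf_le hP hμ0 hLr hrLip hR0 hR hLP hPLip hξ hπs' (hG i) h_field

lemma JN_update_sub_le_JN (hP : IsKernel P) (hμ0 : μ0 ∈ simplex 𝒳) (hLr : 0 ≤ Lr)
    (hrLip : RewardLipschitz r Lr) (hR0 : 0 ≤ R) (hR : ∀ x u ν, ν ∈ subProb 𝒳 → |r x u ν| ≤ R)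
    (hLP : 0 ≤ LP) (hPLip : KernelLipschitz P LP) (hξ : ∀ i k, ξ i k ∈ Set.Icc (0 : ℝ) 1)
    (hπs : ∀ i, IsPolicy (πs i)) (hG : ∀ i t, G i t ∈ subProb 𝒳) {κ : ℝ} (hN : √N ≤ N * κ)
    (hκ : ∀ t < T, ∑ j, fieldGap P μ0 ξ πs G t j + 2 ≤ N * κ)
    (hη : ∀ t < T, fieldGap P μ0 ξ πs G t i ≤ η) (hπd : IsPolicy πd)
    (hopt : Jmf T r P μ0 (G i) πd ≤ Jmf T r P μ0 (G i) (πs i)) :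
    JN T r P μ0 ξ (Function.update πs i πd) i - 2 * (T * ((Lr + R * (T * LP)) *
      (Fintype.card 𝒳 * (2 + LP + LP * Fintype.card 𝒳) ^ T * κ + (η + 2 / N)))) ≤
      JN T r P μ0 ξ πs i := by
  have hN0 : (N : ℝ) ≠ 0 := Nat.cast_ne_zero.2 i.pos.ne'
  have h_approx : ∀ π, IsPolicy π → |JN T r P μ0 ξ (Function.update πs i π) i -
      Jmf T r P μ0 (G i) π| ≤ T * ((Lr + R * (T * LP)) *
      (Fintype.card 𝒳 * (2 + LP + LP * Fintype.card 𝒳) ^ T * κ + (η + 2 / N))) := fun π hπ => by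
    refine (abs_JN_update_sub_Jmf_le hP hμ0 hLr hrLip hR0 hR hLP hPLip hξ hπs hG hN hκ hη hπ).trans
      (le_of_eq ?_)
    field_simp
  have h_dev := (abs_le.1 (h_approx πd hπd)).2
  have h_own := (abs_le.1 (h_approx (πs i) (hπs i))).1
  rw [Function.update_eq_self] at h_own
  linarith

end Deviation

end Dynamics

section Cells

variable {N : ℕ}

/-- The `j`-th of the `N` equal cells of the unit interval, half-open as in `stepGraphon`. -/
def cell (N : ℕ) (j : Fin N) : Set ℝ := Set.Ioc ((j : ℕ) / (N : ℝ)) (((j : ℕ) + 1 : ℝ) / N)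

lemma mem_cell_iff {j : Fin N} {a : ℝ} : a ∈ cell N j ↔ (j : ℕ) < a * N ∧ a * N ≤ (j : ℕ) + 1 := by
  have hN : (0 : ℝ) < N := Nat.cast_pos.2 j.pos
  rw [cell, Set.mem_Ioc, div_lt_iff₀ hN, le_div_iff₀ hN]

lemma measurableSet_cell (j : Fin N) : MeasurableSet (cell N j) := measurableSet_Ioc

lemma rep_mem_cell (j : Fin N) : rep N j ∈ cell N j :=
  ⟨div_lt_div_of_pos_right (lt_add_one _) (Nat.cast_pos.2 j.pos), le_rfl⟩

lemma cell_subset_Ioc (j : Fin N) : cell N j ⊆ Set.Ioc 0 1 :=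
  Set.Ioc_subset_Ioc (by positivity) <|
    div_le_one_of_le₀ (mod_cast j.isLt) N.cast_nonneg

lemma rep_mem_Icc (j : Fin N) : rep N j ∈ Set.Icc (0 : ℝ) 1 :=
  Set.Ioc_subset_Icc_self (cell_subset_Ioc j (rep_mem_cell j))

lemma abs_sub_le_of_mem_cell {j : Fin N} {a b : ℝ} (ha : a ∈ cell N j) (hb : b ∈ cell N j) :
    |a - b| ≤ 1 / N := by
  have h_length : ((j : ℕ) + 1 : ℝ) / N = (j : ℕ) / N + 1 / N := add_div _ _ _
  rw [abs_le]
  constructor <;> linarith [ha.1, ha.2, hb.1, hb.2]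

lemma eq_of_mem_cell {i j : Fin N} {a : ℝ} (hi : a ∈ cell N i) (hj : a ∈ cell N j) : i = j := by
  rw [mem_cell_iff] at hi hj
  have hij : (i : ℕ) < (j : ℕ) + 1 := by exact_mod_cast hi.1.trans_le hj.2
  have hji : (j : ℕ) < (i : ℕ) + 1 := by exact_mod_cast hj.1.trans_le hi.2
  omega

lemma exists_mem_cell (hN : 0 < N) {a : ℝ} (ha : a ∈ Set.Ioc 0 1) : ∃ j, a ∈ cell N j := by
  have h_pos : 0 < ⌈a * N⌉₊ := Nat.ceil_pos.2 (mul_pos ha.1 (Nat.cast_pos.2 hN))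
  have h_le : ⌈a * N⌉₊ ≤ N := Nat.ceil_le.2 (mul_le_of_le_one_left N.cast_nonneg ha.2)
  refine ⟨⟨⌈a * N⌉₊ - 1, by omega⟩, mem_cell_iff.2 ⟨Nat.lt_ceil.1 (Nat.sub_one_lt h_pos.ne'), ?_⟩⟩
  rw [← Nat.cast_add_one, Nat.sub_add_cancel h_pos]
  exact Nat.le_ceil _

lemma iUnion_cell (hN : 0 < N) : ⋃ j, cell N j = Set.Ioc 0 1 :=
  (Set.iUnion_subset cell_subset_Ioc).antisymm fun _ ha =>
    Set.mem_iUnion.2 (exists_mem_cell hN ha)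

lemma integral_Ioc_of_forall_mem_cell (hN : 0 < N) {f : ℝ → ℝ} {c : Fin N → ℝ}
    (hf : ∀ j, ∀ a ∈ cell N j, f a = c j) : ∫ a in Set.Ioc 0 1, f a = (N : ℝ)⁻¹ * ∑ j, c j := by
  have h_volume : ∀ j, volume.real (cell N j) = (N : ℝ)⁻¹ := fun j => by
    rw [cell, Real.volume_real_Ioc_of_le (by gcongr; linarith), ← sub_div, add_sub_cancel_left,
      one_div]
  have h_cell : ∀ j, ∫ a in cell N j, f a = (N : ℝ)⁻¹ * c j := fun j => by
    rw [setIntegral_congr_fun (measurableSet_cell j) (hf j), setIntegral_const, h_volume,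
      smul_eq_mul]
  have h_integrable : ∀ j, IntegrableOn f (cell N j) := fun j =>
    (integrableOn_congr_fun (hf j) (measurableSet_cell j)).2 (integrableOn_const (by simp [cell]))
  rw [← iUnion_cell hN, integral_iUnion_fintype measurableSet_cell (fun i j hij =>
    Set.disjoint_left.2 fun a hi hj => hij (eq_of_mem_cell hi hj)) h_integrable, Finset.mul_sum]
  exact Finset.sum_congr rfl fun j _ => h_cell j

/-- The step function with value `c j` on `cell N j`, and `0` outside of the unit interval. -/
noncomputable def stepFun (c : Fin N → ℝ) (a : ℝ) : ℝ :=
  ∑ j, (cell N j).indicator (fun _ => c j) a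

lemma stepFun_apply_of_mem {j : Fin N} {a : ℝ} (ha : a ∈ cell N j) (c : Fin N → ℝ) :
    stepFun c a = c j := by
  rw [stepFun, Fintype.sum_eq_single j fun k hk =>
    Set.indicator_of_notMem (fun hak => hk (eq_of_mem_cell hak ha)) _]
  exact Set.indicator_of_mem ha _

lemma abs_stepFun_le {c : Fin N → ℝ} {C : ℝ} (hC : 0 ≤ C) (hc : ∀ j, |c j| ≤ C) (a : ℝ) :
    |stepFun c a| ≤ C := by
  by_cases h : ∃ j, a ∈ cell N j
  · obtain ⟨j, hj⟩ := h
    simpa only [stepFun_apply_of_mem hj] using hc j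
  · push Not at h
    simpa [stepFun, Set.indicator_of_notMem (h _)] using hC

lemma measurable_stepFun (c : Fin N → ℝ) : Measurable (stepFun c) :=
  Finset.measurable_fun_sum _ fun j _ => measurable_const.indicator (measurableSet_cell j)

lemma stepGraphon_eq_stepFun (w : Fin N → Fin N → ℝ) (a b : ℝ) :
    stepGraphon w a b = stepFun (fun i => stepFun (w i) b) a := by
  simp only [stepGraphon, stepFun, Set.indicator_apply, cell, Set.mem_Ioc, ite_mul, one_mul,
    zero_mul, Finset.sum_ite_irrel, Finset.sum_const_zero]

lemma stepGraphon_apply_of_mem {i j : Fin N} {a b : ℝ} (ha : a ∈ cell N i) (hb : b ∈ cell N j)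
    (w : Fin N → Fin N → ℝ) : stepGraphon w a b = w i j := by
  rw [stepGraphon_eq_stepFun, stepFun_apply_of_mem ha, stepFun_apply_of_mem hb]

lemma measurable_uncurry_stepGraphon (w : Fin N → Fin N → ℝ) :
    Measurable (Function.uncurry (stepGraphon w)) := by
  simp only [Function.uncurry_def, stepGraphon_eq_stepFun]
  exact Finset.measurable_fun_sum _ fun i _ =>
    ((measurable_stepFun (w i)).comp measurable_snd).indicator
      (measurable_fst (measurableSet_cell i))

lemma integrable_stepGraphon {μ : Measure (ℝ × ℝ)} [IsFiniteMeasure μ] {w : Fin N → Fin N → ℝ}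
    {C : ℝ} (hC : 0 ≤ C) (hw : ∀ i j, |w i j| ≤ C) :
    Integrable (Function.uncurry (stepGraphon w)) μ :=
  .of_bound (measurable_uncurry_stepGraphon w).aestronglyMeasurable C <|
    .of_forall fun z => by
      rw [Function.uncurry_apply_pair, stepGraphon_eq_stepFun]
      exact abs_stepFun_le hC (fun i => abs_stepFun_le hC (hw i) z.2) z.1

lemma integral_abs_integral_stepGraphon (hN : 0 < N) (w : Fin N → Fin N → ℝ) :
    ∫ a in Set.Ioc 0 1, |∫ b in Set.Ioc 0 1, stepGraphon w a b| =
      (N : ℝ)⁻¹ * ∑ i, |(N : ℝ)⁻¹ * ∑ j, w i j| :=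
  integral_Ioc_of_forall_mem_cell hN fun _ _ ha => congrArg _ <|
    integral_Ioc_of_forall_mem_cell hN fun _ _ hb => stepGraphon_apply_of_mem ha hb w

end Cells

lemma integral_abs_integral_le_add {α β : Type*} [MeasurableSpace α] [MeasurableSpace β]
    {μ : Measure α} {ν : Measure β} [IsProbabilityMeasure μ] [IsProbabilityMeasure ν]
    {f g : α → β → ℝ} {e : ℝ} (hf : Integrable (Function.uncurry f) (μ.prod ν))
    (hg : Integrable (Function.uncurry g) (μ.prod ν))
    (hfg : ∀ᵐ a ∂μ, ∀ᵐ b ∂ν, |f a b - g a b| ≤ e) :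
    ∫ a, |∫ b, f a b ∂ν| ∂μ ≤ ∫ a, |∫ b, g a b ∂ν| ∂μ + e := by
  have hg_abs : Integrable (fun a => |∫ b, g a b ∂ν|) μ := hg.integral_prod_left.abs
  calc ∫ a, |∫ b, f a b ∂ν| ∂μ ≤ ∫ a, (|∫ b, g a b ∂ν| + e) ∂μ := by
        refine integral_mono_ae hf.integral_prod_left.abs (hg_abs.add (integrable_const e)) ?_
        filter_upwards [hfg, hf.prod_right_ae, hg.prod_right_ae] with a h hfa hga
        have h_diff : |(∫ b, f a b ∂ν) - ∫ b, g a b ∂ν| ≤ e := by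
          rw [← integral_sub (f := f a) (g := g a) hfa hga]
          simpa using norm_integral_le_of_norm_le_const (f := fun b => f a b - g a b) h
        rw [← sub_le_iff_le_add']
        exact (abs_sub_abs_le_abs_sub _ _).trans h_diff
    _ = ∫ a, |∫ b, g a b ∂ν| ∂μ + e := by
        rw [integral_add hg_abs (integrable_const e)]
        simp

section Sampling

variable {N : ℕ} {W : ℝ → ℝ → ℝ} {LW : ℝ}

lemma GraphonLipschitz.mono {L' : ℝ} (h : GraphonLipschitz W LW) (hL : LW ≤ L') :
    GraphonLipschitz W L' := fun a b a' b' ha hb ha' hb' =>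
  (h a b a' b' ha hb ha' hb').trans (mul_le_mul_of_nonneg_right hL (by positivity))

/-- Testing the `L∞ → L¹` bound on step functions, and moving the arguments of `W` to the sampling
points, turns it into a bound for matrices. -/
lemma avg_abs_avg_sub_sample_le (hN : 0 < N) {w : Fin N → Fin N → ℝ}
    (hw : ∀ i j, w i j ∈ Set.Icc (0 : ℝ) 1) (hWm : Measurable (Function.uncurry W))
    (hW : ∀ a b, W a b ∈ Set.Icc (0 : ℝ) 1) (hLW : 0 ≤ LW) (hWLip : GraphonLipschitz W LW)
    {ε δ : ℝ} (hε : ∀ g : ℝ → ℝ, Measurable g → (∀ b, |g b| ≤ 1) →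
      ∫ a in Set.Ioc (0 : ℝ) 1, |∫ b in Set.Ioc (0 : ℝ) 1, (stepGraphon w a b - W a b) * g b| ≤ ε)
    {s : Fin N → ℝ} (hs : ∀ j, s j ∈ Set.Icc (0 : ℝ) 1) (hδ : ∀ j, ∀ a ∈ cell N j, |a - s j| ≤ δ)
    {c : Fin N → ℝ} (hc : ∀ k, |c k| ≤ 1) :
    (N : ℝ)⁻¹ * ∑ j, |(N : ℝ)⁻¹ * ∑ k, (w j k - W (s j) (s k)) * c k| ≤ ε + LW * (δ + δ) := by
  have : IsProbabilityMeasure (volume.restrict (Set.Ioc (0 : ℝ) 1)) := ⟨by simp⟩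
  set w' : Fin N → Fin N → ℝ := fun j k => (w j k - W (s j) (s k)) * c k
  have hW_abs : ∀ a b, |W a b| ≤ 1 := fun a b => by
    rw [abs_of_nonneg (hW a b).1]; exact (hW a b).2
  have hw_abs : ∀ j k, |w j k| ≤ 1 := fun j k => by
    rw [abs_of_nonneg (hw j k).1]; exact (hw j k).2
  have hw' : ∀ j k, |w' j k| ≤ 1 := fun j k => by
    rw [abs_mul]
    exact mul_le_one₀ (abs_sub_le_of_nonneg_of_le (hw j k).1 (hw j k).2 (hW _ _).1 (hW _ _).2)
      (abs_nonneg _) (hc k)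
  have h_test : Integrable (Function.uncurry fun a b => (stepGraphon w a b - W a b) * stepFun c b)
      ((volume.restrict (Set.Ioc 0 1)).prod (volume.restrict (Set.Ioc 0 1))) :=
    ((integrable_stepGraphon zero_le_one hw_abs).sub (.of_bound hWm.aestronglyMeasurable 1
      (.of_forall fun z => hW_abs z.1 z.2))).mul_bdd
      ((measurable_stepFun c).comp measurable_snd).aestronglyMeasurable
      (.of_forall fun z => abs_stepFun_le zero_le_one hc z.2)
  have h_close : ∀ᵐ a ∂volume.restrict (Set.Ioc (0 : ℝ) 1),
      ∀ᵐ b ∂volume.restrict (Set.Ioc (0 : ℝ) 1),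
        |stepGraphon w' a b - (stepGraphon w a b - W a b) * stepFun c b| ≤ LW * (δ + δ) := by
    refine ae_restrict_of_forall_mem measurableSet_Ioc fun a ha =>
      ae_restrict_of_forall_mem measurableSet_Ioc fun b hb => ?_
    obtain ⟨j, hj⟩ := exists_mem_cell hN ha
    obtain ⟨k, hk⟩ := exists_mem_cell hN hb
    rw [stepGraphon_apply_of_mem hj hk, stepGraphon_apply_of_mem hj hk, stepFun_apply_of_mem hk,
      ← sub_mul, sub_sub_sub_cancel_left, abs_mul]
    refine (mul_le_of_le_one_right (abs_nonneg _) (hc k)).trans ?_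
    refine (hWLip a b _ _ (Set.Ioc_subset_Icc_self ha) (Set.Ioc_subset_Icc_self hb)
      (hs j) (hs k)).trans ?_
    gcongr
    exacts [hδ j a hj, hδ k b hk]
  rw [← integral_abs_integral_stepGraphon hN]
  refine (integral_abs_integral_le_add (integrable_stepGraphon zero_le_one hw')
    h_test h_close).trans ?_
  exact add_le_add_left (hε _ (measurable_stepFun c) (abs_stepFun_le zero_le_one hc)) _

end Sampling

section Classes

variable {N M : ℕ}

lemma abs_card_filter_Ioc_sub_le {x y : ℝ} (hx : 0 ≤ x) (hxy : x ≤ y) (hy : y ≤ N) :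
    |({k : Fin N | ((k : ℕ) + 1 : ℝ) ∈ Set.Ioc x y} : Finset (Fin N)).card - (y - x)| ≤ 1 := by
  have h_card : ({k : Fin N | ((k : ℕ) + 1 : ℝ) ∈ Set.Ioc x y} : Finset (Fin N)).card =
      (Finset.Ioc ⌊x⌋₊ ⌊y⌋₊).card := by
    refine Finset.card_bij (fun k _ => (k : ℕ) + 1) (fun k hk => ?_)
      (fun k _ l _ h => Fin.ext (Nat.succ.inj h)) fun b hb => ?_
    · simpa [Nat.floor_lt hx, Nat.le_floor_iff (hx.trans hxy)] using hk
    · obtain ⟨hxb, hby⟩ := Finset.mem_Ioc.1 hb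
      have hb_pos : 1 ≤ b := (Nat.zero_le _).trans_lt hxb
      have hbN : b ≤ N := hby.trans (Nat.floor_le_of_le hy)
      refine ⟨⟨b - 1, by omega⟩, ?_, Nat.sub_add_cancel hb_pos⟩
      rw [Nat.floor_lt hx] at hxb
      rw [Nat.le_floor_iff (hx.trans hxy)] at hby
      simpa [Nat.cast_sub hb_pos] using ⟨hxb, hby⟩
  rw [h_card, Nat.card_Ioc, Nat.cast_sub (Nat.floor_mono hxy), abs_le]
  constructor <;> linarith [Nat.floor_le hx, Nat.floor_le (hx.trans hxy), Nat.lt_floor_add_one x,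
    Nat.lt_floor_add_one y]

variable {c : Fin N → Fin M}

lemma abs_card_class_sub_le (hc : ∀ k, rep N k ∈ cell M (c k)) (n : Fin M) :
    |(({k | c k = n} : Finset (Fin N)).card : ℝ) - N / M| ≤ 1 := by
  have hM : (0 : ℝ) < M := Nat.cast_pos.2 n.pos
  have h_mem : ∀ k, c k = n ↔
      ((k : ℕ) + 1 : ℝ) ∈ Set.Ioc ((n : ℕ) / (M : ℝ) * N) (((n : ℕ) + 1 : ℝ) / M * N) := fun k => by
    have hN : (0 : ℝ) < N := Nat.cast_pos.2 k.pos
    rw [Set.mem_Ioc, ← lt_div_iff₀ hN, ← div_le_iff₀ hN]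
    exact ⟨fun h => h ▸ hc k, eq_of_mem_cell (hc k)⟩
  have h_length : ((n : ℕ) + 1 : ℝ) / M * N - (n : ℕ) / (M : ℝ) * N = N / M := by ring
  simp only [h_mem]
  rw [← h_length]
  refine abs_card_filter_Ioc_sub_le (by positivity) (by gcongr; linarith) ?_
  exact mul_le_of_le_one_left N.cast_nonneg ((div_le_one hM).2 (mod_cast n.isLt))

lemma abs_avg_comp_class_sub_avg_le (hN : 0 < N) (hc : ∀ k, rep N k ∈ cell M (c k)) {F : Fin M → ℝ}
    (hF : ∀ n, |F n| ≤ 1) :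
    |(N : ℝ)⁻¹ * ∑ k, F (c k) - (M : ℝ)⁻¹ * ∑ n, F n| ≤ M / N := by
  have hN : (0 : ℝ) < N := Nat.cast_pos.2 hN
  have h_fiber : ∑ k, F (c k) = ∑ n, (({k | c k = n} : Finset (Fin N)).card : ℝ) * F n := by
    rw [← Finset.sum_fiberwise' Finset.univ c F]
    simp only [Finset.sum_const, nsmul_eq_mul]
  have h_split : (N : ℝ)⁻¹ * ∑ k, F (c k) - (M : ℝ)⁻¹ * ∑ n, F n =
      (N : ℝ)⁻¹ * ∑ n, ((({k | c k = n} : Finset (Fin N)).card : ℝ) - N / M) * F n := by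
    simp only [h_fiber, sub_mul, Finset.sum_sub_distrib, mul_sub, ← Finset.mul_sum]
    field_simp
  rw [h_split, abs_mul, abs_of_pos (inv_pos.2 hN), div_eq_inv_mul (M : ℝ) N]
  refine mul_le_mul_of_nonneg_left ?_ (inv_pos.2 hN).le
  calc |∑ n, ((({k | c k = n} : Finset (Fin N)).card : ℝ) - N / M) * F n|
      ≤ ∑ _n : Fin M, (1 : ℝ) :=
        (Finset.abs_sum_le_sum_abs _ _).trans <| Finset.sum_le_sum fun n _ => by
          rw [abs_mul]
          exact mul_le_one₀ (abs_card_class_sub_le hc n) (abs_nonneg _) (hF n)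
    _ = M := by simp

lemma sum_l1dist_graphNbhd_approxNbhd_le [Fintype 𝒳] (hN : 0 < N) {w : Fin N → Fin N → ℝ}
    (hw : ∀ i j, w i j ∈ Set.Icc (0 : ℝ) 1) {W : ℝ → ℝ → ℝ}
    (hWm : Measurable (Function.uncurry W)) (hW : ∀ a b, W a b ∈ Set.Icc (0 : ℝ) 1) {LW : ℝ}
    (hLW : 0 ≤ LW) (hWLip : GraphonLipschitz W LW) {δ : ℝ}
    (hδ : ∀ g : ℝ → ℝ, Measurable g → (∀ b, |g b| ≤ 1) →
      ∫ a in Set.Ioc (0 : ℝ) 1, |∫ b in Set.Ioc (0 : ℝ) 1, (stepGraphon w a b - W a b) * g b| ≤ δ)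
    (hc : ∀ k, rep N k ∈ cell M (c k)) {ν : Fin M → 𝒳 → ℝ} (hν : ∀ n, ν n ∈ simplex 𝒳) :
    ∑ j, l1dist (graphNbhd w (fun k => ν (c k)) j) (approxNbhd W ν (c j)) ≤
      N * (Fintype.card 𝒳 * (δ + LW * (2 * (1 / M + 1 / N)) + M / N)) := by
  have hN' : (0 : ℝ) < N := Nat.cast_pos.2 hN
  have h_rep : ∀ j, ∀ a ∈ cell N j, |a - rep M (c j)| ≤ 1 / M + 1 / N := fun j a ha => by
    rw [add_comm]
    exact (abs_sub_le a (rep N j) _).trans (add_le_add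
      (abs_sub_le_of_mem_cell ha (rep_mem_cell j))
      (abs_sub_le_of_mem_cell (hc j) (rep_mem_cell (c j))))
  have h_sample : ∀ x, ∑ j, |(N : ℝ)⁻¹ * ∑ k, (w j k - W (rep M (c j)) (rep M (c k))) * ν (c k) x| ≤
      N * (δ + LW * (2 * (1 / M + 1 / N))) := fun x => by
    rw [← inv_mul_le_iff₀ hN', two_mul]
    exact avg_abs_avg_sub_sample_le hN hw hWm hW hLW hWLip hδ (fun j => rep_mem_Icc (c j)) h_rep
      fun k => abs_apply_le_one (hν (c k)) x
  have h_class : ∀ x j, |(N : ℝ)⁻¹ * ∑ k, W (rep M (c j)) (rep M (c k)) * ν (c k) x -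
      approxNbhd W ν (c j) x| ≤ M / N := fun x j =>
    abs_avg_comp_class_sub_avg_le hN hc
      (F := fun n => W (rep M (c j)) (rep M n) * ν n x) fun n => by
        rw [abs_mul, abs_of_nonneg (hW _ _).1]
        exact mul_le_one₀ (hW _ _).2 (abs_nonneg _) (abs_apply_le_one (hν n) x)
  have h_split : ∀ x j, |graphNbhd w (fun k => ν (c k)) j x - approxNbhd W ν (c j) x| ≤
      |(N : ℝ)⁻¹ * ∑ k, (w j k - W (rep M (c j)) (rep M (c k))) * ν (c k) x| + M / N := by
    intro x j
    simp only [sub_mul, Finset.sum_sub_distrib, mul_sub]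
    exact (abs_sub_le _ _ _).trans (add_le_add_right (h_class x j) _)
  simp only [l1dist]
  rw [Finset.sum_comm]
  calc _ ≤ ∑ _x : 𝒳, N * (δ + LW * (2 * (1 / M + 1 / N)) + M / N) := by
        refine Finset.sum_le_sum fun x _ => (Finset.sum_le_sum fun j _ => h_split x j).trans ?_
        rw [Finset.sum_add_distrib, mul_add (N : ℝ) _ (M / N)]
        simpa using h_sample x
    _ = _ := by
        rw [Finset.sum_const, Finset.card_univ, nsmul_eq_mul]
        ring

end Classes

section ApproximateEquilibrium

lemma floor_le_card_filter_le {ι : Type*} [Fintype ι] {d : ι → ℝ} {η p : ℝ} (hd : ∀ i, 0 ≤ d i)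
    (hη : 0 < η) (h : ∑ i, d i ≤ Fintype.card ι * (p * η)) :
    ⌊(1 - p) * Fintype.card ι⌋ ≤ (({i | d i ≤ η} : Finset ι).card : ℤ) := by
  classical
  set S : Finset ι := {i | d i ≤ η}
  have h_markov : Sᶜ.card * η ≤ p * Fintype.card ι * η :=
    calc Sᶜ.card * η ≤ ∑ i ∈ Sᶜ, d i := by
          rw [← nsmul_eq_mul]
          exact Finset.card_nsmul_le_sum _ _ _ fun i hi => by
            simpa [S] using (not_le.1 (by simpa [S] using hi : ¬d i ≤ η)).le
      _ ≤ ∑ i, d i := Finset.sum_le_univ_sum_of_nonneg hd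
      _ ≤ p * Fintype.card ι * η := by linarith
  have h_compl : (S.card : ℝ) + Sᶜ.card = Fintype.card ι := mod_cast Finset.card_add_card_compl S
  have h_real : (1 - p) * Fintype.card ι ≤ S.card := by
    linarith [le_of_mul_le_mul_right h_markov hη]
  exact_mod_cast (Int.floor_le _).trans h_real

variable [Fintype 𝒳] [Fintype 𝒰]

/-- An (ε,p)-Markov–Nash equilibrium of the graph game: all but a fraction `p` of the agents gain
at most `ε` by a unilateral deviation. -/
def IsApproxNash [DecidableEq 𝒳] {N : ℕ} (T : ℕ) (r : 𝒳 → 𝒰 → (𝒳 → ℝ) → ℝ)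
    (P : 𝒳 → 𝒰 → (𝒳 → ℝ) → 𝒳 → ℝ) (μ0 : 𝒳 → ℝ) (ξ : Fin N → Fin N → ℝ) (ε p : ℝ)
    (πs : Fin N → ℕ → 𝒳 → 𝒰 → ℝ) : Prop :=
  ∃ Wset : Finset (Fin N), ⌊(1 - p) * (N : ℝ)⌋ ≤ (Wset.card : ℤ) ∧
    ∀ i ∈ Wset, ∀ πd : ℕ → 𝒳 → 𝒰 → ℝ, IsPolicy πd →
      JN T r P μ0 ξ (Function.update πs i πd) i - ε ≤ JN T r P μ0 ξ πs i

variable {P : 𝒳 → 𝒰 → (𝒳 → ℝ) → 𝒳 → ℝ} {r : 𝒳 → 𝒰 → (𝒳 → ℝ) → ℝ} {μ0 : 𝒳 → ℝ} {Lr LP : ℝ}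

lemma isApproxNash_of_sum_fieldGap_le [DecidableEq 𝒳] {T N : ℕ} {ξ : Fin N → Fin N → ℝ}
    {πs : Fin N → ℕ → 𝒳 → 𝒰 → ℝ} {G : Fin N → ℕ → 𝒳 → ℝ} {ε p η κ : ℝ} (hη : 0 < η)
    (hκη : T * κ ≤ p * η) (hκ : ∀ t < T, ∑ i, fieldGap P μ0 ξ πs G t i ≤ N * κ)
    (h : ∀ i, (∀ t < T, fieldGap P μ0 ξ πs G t i ≤ η) → ∀ πd, IsPolicy πd →
      JN T r P μ0 ξ (Function.update πs i πd) i - ε ≤ JN T r P μ0 ξ πs i) :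
    IsApproxNash T r P μ0 ξ ε p πs := by
  have h_nonneg : ∀ t i, 0 ≤ fieldGap P μ0 ξ πs G t i := fun t i => l1dist_nonneg _ _
  have h_sum : ∑ i, ∑ t ∈ Finset.range T, fieldGap P μ0 ξ πs G t i ≤ N * (p * η) := by
    rw [Finset.sum_comm]
    calc _ ≤ ∑ _t ∈ Finset.range T, N * κ :=
          Finset.sum_le_sum fun t ht => hκ t (Finset.mem_range.1 ht)
      _ = N * (T * κ) := by
          rw [Finset.sum_const, Finset.card_range, nsmul_eq_mul, mul_left_comm]
      _ ≤ _ := by gcongr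
  refine ⟨({i | ∑ t ∈ Finset.range T, fieldGap P μ0 ξ πs G t i ≤ η} : Finset (Fin N)), ?_,
    fun i hi => h i fun t ht => ?_⟩
  · simpa using floor_le_card_filter_le
      (fun i => Finset.sum_nonneg fun t (_ : t ∈ Finset.range T) => h_nonneg t i) hη (by simpa)
  · exact (Finset.single_le_sum (fun t _ => h_nonneg t i) (Finset.mem_range.2 ht)).trans
      (Finset.mem_filter.1 hi).2

lemma exists_accuracy_isApproxNash [DecidableEq 𝒳] (T : ℕ) (hP : IsKernel P)
    (hμ0 : μ0 ∈ simplex 𝒳) (hrLip : RewardLipschitz r Lr) (hPLip : KernelLipschitz P LP) {ε p : ℝ}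
    (hε : 0 < ε) (hp : 0 < p) :
    ∃ κ > 0, ∀ {N : ℕ} {ξ : Fin N → Fin N → ℝ} {πs : Fin N → ℕ → 𝒳 → 𝒰 → ℝ}
      {G : Fin N → ℕ → 𝒳 → ℝ}, (∀ i k, ξ i k ∈ Set.Icc (0 : ℝ) 1) → (∀ i, IsPolicy (πs i)) →
      (∀ i t, G i t ∈ subProb 𝒳) →
      (∀ i πd, IsPolicy πd → Jmf T r P μ0 (G i) πd ≤ Jmf T r P μ0 (G i) (πs i)) →
      √N ≤ N * κ → (∀ t, ∑ j, fieldGap P μ0 ξ πs G t j + 2 ≤ N * κ) →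
      IsApproxNash T r P μ0 ξ ε p πs := by
  obtain ⟨R, hR0, hR⟩ := exists_reward_bound hrLip
  set C : ℝ := T * (|Lr| + R * (T * |LP|)) with hC
  set K : ℝ := Fintype.card 𝒳 * (2 + |LP| + |LP| * Fintype.card 𝒳) ^ T
  obtain ⟨η, hη, hCη⟩ := exists_pos_mul_lt hε (4 * C)
  obtain ⟨κ, hκ, hKκ⟩ := exists_pos_mul_lt hη (K + 1 + T / p)
  have hκη : T * κ ≤ p * η := by
    rw [mul_comm p, ← div_le_iff₀ hp, mul_div_right_comm]
    have : 0 ≤ (K + 1) * κ := by positivity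
    linarith
  refine ⟨κ, hκ, fun {N ξ πs G} hξ hπs hG hopt hN hgap =>
    isApproxNash_of_sum_fieldGap_le hη hκη
      (fun t _ => (le_add_of_nonneg_right zero_le_two).trans (hgap t)) fun i h_own πd hπd => ?_⟩
  have h_two : 2 / N ≤ κ := by
    rw [div_le_iff₀' (Nat.cast_pos.2 i.pos)]
    exact (le_add_of_nonneg_left (Finset.sum_nonneg fun j _ => l1dist_nonneg _ _)).trans (hgap 0)
  have h_err : 2 * (T * ((|Lr| + R * (T * |LP|)) * (K * κ + (η + 2 / N)))) ≤ ε := by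
    have hTp : 0 ≤ T / p * κ := by positivity
    calc _ = 2 * C * (K * κ + (η + 2 / N)) := by rw [hC]; ring
      _ ≤ 2 * C * (2 * η) := by gcongr; linarith
      _ ≤ ε := by linarith
  exact (sub_le_sub_left h_err _).trans <| JN_update_sub_le_JN hP hμ0 (abs_nonneg Lr)
    (hrLip.mono (le_abs_self Lr)) hR0 hR (abs_nonneg LP) (hPLip.mono (le_abs_self LP)) hξ hπs hG
    hN (fun t _ => hgap t) h_own hπd (hopt i πd hπd)

end ApproximateEquilibrium

section EquivalenceClasses

variable [Fintype 𝒳] [Fintype 𝒰] {P : 𝒳 → 𝒰 → (𝒳 → ℝ) → 𝒳 → ℝ} {μ0 : 𝒳 → ℝ}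
  {W : ℝ → ℝ → ℝ} {M : ℕ} {πm : Fin M → ℕ → 𝒳 → 𝒰 → ℝ}

lemma approxNbhd_mem_subProb (hW : ∀ a b, W a b ∈ Set.Icc (0 : ℝ) 1) {ν : Fin M → 𝒳 → ℝ}
    (hν : ∀ n, ν n ∈ simplex 𝒳) (m : Fin M) : approxNbhd W ν m ∈ subProb 𝒳 :=
  graphNbhd_mem_subProb (w := fun m n => W (rep M m) (rep M n)) (fun _ _ => hW _ _) hν m

lemma approxMF_mem_simplex (hP : IsKernel P) (hμ0 : μ0 ∈ simplex 𝒳)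
    (hW : ∀ a b, W a b ∈ Set.Icc (0 : ℝ) 1) (hπm : ∀ m, IsPolicy (πm m)) :
    ∀ t m, approxMF W P μ0 πm t m ∈ simplex 𝒳
  | 0, _ => hμ0
  | t + 1, m => mixture_mem_simplex (approxMF_mem_simplex hP hμ0 hW hπm t m)
      (stepLaw_mem_simplex hP (hπm m)
        (approxNbhd_mem_subProb hW (approxMF_mem_simplex hP hμ0 hW hπm t) m) t)

lemma stateLaw_approxNbhd_approxMF (m : Fin M) (t : ℕ) :
    stateLaw P μ0 (fun t => approxNbhd W (approxMF W P μ0 πm t) m) (πm m) t =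
      approxMF W P μ0 πm t m := by
  induction t with
  | zero => rfl
  | succ t ih => simp only [stateLaw, approxMF, ih]

lemma eventually_sum_fieldGap_le {LW : ℝ} (hP : IsKernel P) (hμ0 : μ0 ∈ simplex 𝒳)
    (hWm : Measurable (Function.uncurry W)) (hW : ∀ a b, W a b ∈ Set.Icc (0 : ℝ) 1)
    (hWLip : GraphonLipschitz W LW) {ξ : (N : ℕ) → Fin N → Fin N → ℝ}
    (hξ : ∀ N i j, ξ N i j ∈ Set.Icc (0 : ℝ) 1)
    (hWconv : OpConvergesTo (fun N => stepGraphon (ξ N)) W) {κ : ℝ} (hκ : 0 < κ) :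
    ∀ᶠ M in atTop, ∀ᶠ N in atTop, ∀ πm : Fin M → ℕ → 𝒳 → 𝒰 → ℝ, (∀ m, IsPolicy (πm m)) →
      ∀ c : Fin N → Fin M, (∀ j, rep N j ∈ cell M (c j)) →
      ∀ t, ∑ j, fieldGap P μ0 (ξ N) (fun j => πm (c j))
        (fun j t => approxNbhd W (approxMF W P μ0 πm t) (c j)) t j + 2 ≤ N * κ := by
  obtain ⟨δ, hδ, hδκ⟩ := exists_pos_mul_lt hκ (Fintype.card 𝒳)
  have h_class : Tendsto (fun M : ℕ => Fintype.card 𝒳 * (δ + |LW| * (2 * (1 / (M : ℝ)))))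
      atTop (nhds (Fintype.card 𝒳 * δ)) := by
    have h_width := (tendsto_one_div_atTop_nhds_zero_nat (𝕜 := ℝ)).const_mul 2
    simpa using ((h_width.const_mul |LW|).const_add δ).const_mul (Fintype.card 𝒳 : ℝ)
  filter_upwards [h_class.eventually_lt_const hδκ] with M hM
  have h_agent : Tendsto (fun N : ℕ => Fintype.card 𝒳 * (δ + |LW| * (2 * (1 / M + 1 / (N : ℝ))) +
      M / N) + 2 / N) atTop (nhds (Fintype.card 𝒳 * (δ + |LW| * (2 * (1 / M))))) := by
    have h_width := (tendsto_one_div_atTop_nhds_zero_nat (𝕜 := ℝ)).const_add (1 / (M : ℝ))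
    simpa using ((((h_width.const_mul 2).const_mul |LW|).const_add δ).add
      (tendsto_const_div_atTop_nhds_zero_nat (M : ℝ))).const_mul (Fintype.card 𝒳 : ℝ) |>.add
      (tendsto_const_div_atTop_nhds_zero_nat 2)
  obtain ⟨N₀, hN₀⟩ := hWconv δ hδ
  filter_upwards [h_agent.eventually_lt_const hM, eventually_ge_atTop N₀, eventually_gt_atTop 0]
    with N hNκ hNN₀ hN πm hπm c hc t
  have hN' : (0 : ℝ) < N := Nat.cast_pos.2 hN
  have h_gap := sum_l1dist_graphNbhd_approxNbhd_le hN (hξ N) hWm hW (abs_nonneg LW)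
    (hWLip.mono (le_abs_self LW)) (hN₀ N hNN₀) hc (approxMF_mem_simplex hP hμ0 hW hπm t)
  simp only [fieldGap, stateLaw_approxNbhd_approxMF]
  calc _ ≤ N * (Fintype.card 𝒳 * (δ + |LW| * (2 * (1 / M + 1 / N)) + M / N)) + 2 := by gcongr
    _ = N * (Fintype.card 𝒳 * (δ + |LW| * (2 * (1 / M + 1 / N)) + M / N) + 2 / N) := by
        rw [mul_add (N : ℝ) _ (2 / N), mul_div_cancel₀ _ hN'.ne']
    _ ≤ N * κ := by gcongr

lemma eventually_sqrt_le_mul {κ : ℝ} (hκ : 0 < κ) : ∀ᶠ N : ℕ in atTop, √N ≤ N * κ := by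
  have h_large := (tendsto_natCast_atTop_atTop (R := ℝ)).atTop_mul_const (pow_pos hκ 2)
  filter_upwards [h_large.eventually_ge_atTop 1] with N hN
  refine Real.sqrt_le_iff.2 ⟨by positivity, ?_⟩
  calc (N : ℝ) ≤ N * (N * κ ^ 2) := le_mul_of_one_le_right N.cast_nonneg hN
    _ = (N * κ) ^ 2 := by ring

end EquivalenceClasses

theorem eq_class_approximate_nash_general [Fintype 𝒳] [DecidableEq 𝒳] [Fintype 𝒰]
    (T : ℕ) {μ0 : 𝒳 → ℝ} (hμ0 : μ0 ∈ simplex 𝒳) {P : 𝒳 → 𝒰 → (𝒳 → ℝ) → 𝒳 → ℝ} (hP : IsKernel P)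
    {r : 𝒳 → 𝒰 → (𝒳 → ℝ) → ℝ} {Lr LP LW : ℝ} (hrLip : RewardLipschitz r Lr)
    (hPLip : KernelLipschitz P LP) {W : ℝ → ℝ → ℝ} (hWm : Measurable (Function.uncurry W))
    (hW : ∀ a b, W a b ∈ Set.Icc (0 : ℝ) 1) (hWLip : GraphonLipschitz W LW)
    {ξ : (N : ℕ) → Fin N → Fin N → ℝ} (hξ : ∀ N i j, ξ N i j ∈ Set.Icc (0 : ℝ) 1)
    (hWconv : OpConvergesTo (fun N => stepGraphon (ξ N)) W) {ε p : ℝ} (hε : 0 < ε) (hp : 0 < p) :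
    ∀ᶠ M in atTop, ∀ᶠ N in atTop, ∀ πm : Fin M → ℕ → 𝒳 → 𝒰 → ℝ,
      IsEqClassSolution T W P r μ0 πm → ∀ πs : Fin N → ℕ → 𝒳 → 𝒰 → ℝ,
        (∀ j m, rep N j ∈ cell M m → πs j = πm m) → IsApproxNash T r P μ0 (ξ N) ε p πs := by
  obtain ⟨κ, hκ, h_nash⟩ := exists_accuracy_isApproxNash T hP hμ0 hrLip hPLip hε hp
  filter_upwards [eventually_sum_fieldGap_le hP hμ0 hWm hW hWLip hξ hWconv hκ,
    eventually_gt_atTop 0] with M h_gap hM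
  filter_upwards [h_gap, eventually_sqrt_le_mul hκ] with N h_gap hN πm ⟨hπm, hopt⟩ πs hπs
  choose c hc using fun j : Fin N => exists_mem_cell hM (cell_subset_Ioc j (rep_mem_cell j))
  obtain rfl : πs = fun j => πm (c j) := funext fun j => hπs j (c j) (hc j)
  exact h_nash (hξ N) (fun j => hπm (c j))
    (fun j t => approxNbhd_mem_subProb hW (approxMF_mem_simplex hP hμ0 hW hπm t) (c j))
    (fun j => hopt (c j)) hN (h_gap πm hπm c hc)

/-- under Assumptions (W) and (Lip), a solution (𝛑, 𝛍) of the M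
equivalence classes method yields approximate Nash equilibria: for any ε, p > 0 there
exist M ∈ ℕ and N' ∈ ℕ such that for all N > N', the N-agent policy Γ_N(𝛑) (where 𝛑 is
the block-constant policy ensemble with value π^{α_m} on Ĩ_m = (m/M,(m+1)/M]) is an
(ε,p)-Markov–Nash equilibrium of the N-agent graph game. -/
theorem eq_class_approximate_nash
    {𝒳 𝒰 : Type*} [Fintype 𝒳] [DecidableEq 𝒳] [Nonempty 𝒳] [Fintype 𝒰] [Nonempty 𝒰]
    (T : ℕ) (μ0 : 𝒳 → ℝ) (hμ0 : μ0 ∈ simplex 𝒳)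
    (P : 𝒳 → 𝒰 → (𝒳 → ℝ) → 𝒳 → ℝ) (hP : IsKernel P)
    (r : 𝒳 → 𝒰 → (𝒳 → ℝ) → ℝ)
    (Lr LP LW : ℝ) (hrLip : RewardLipschitz r Lr) (hPLip : KernelLipschitz P LP)
    (W : ℝ → ℝ → ℝ) (hW : IsGraphon W) (hWLip : GraphonLipschitz W LW)
    (ξ : (N : ℕ) → Fin N → Fin N → ℝ) (hξ : ∀ N, IsEdgeWeights (ξ N))
    (hWconv : OpConvergesTo (fun N => stepGraphon (ξ N)) W)
    (ε p : ℝ) (hε : 0 < ε) (hp : 0 < p) :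
    ∃ M' : ℕ, ∀ M > M', ∀ πm : Fin M → ℕ → 𝒳 → 𝒰 → ℝ,
      IsEqClassSolution T W P r μ0 πm →
      ∃ N' : ℕ, ∀ N > N',
        ∀ πs : Fin N → ℕ → 𝒳 → 𝒰 → ℝ,
          (∀ (j : Fin N) (m : Fin M),
            (((j : ℕ) : ℝ) + 1) / N ∈
              Set.Ioc (((m : ℕ) : ℝ) / M) ((((m : ℕ) : ℝ) + 1) / M) → πs j = πm m) →
          ∃ Wset : Finset (Fin N),
            ⌊(1 - p) * (N : ℝ)⌋ ≤ (Wset.card : ℤ) ∧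
            ∀ i ∈ Wset, ∀ πd : ℕ → 𝒳 → 𝒰 → ℝ, IsPolicy πd →
              JN T r P μ0 (ξ N) (Function.update πs i πd) i - ε ≤
                JN T r P μ0 (ξ N) πs i := by
  have hξ01 : ∀ N i j, ξ N i j ∈ Set.Icc (0 : ℝ) 1 := fun N i j => by
    rcases (hξ N).1 i j with h | h <;> simp [h]
  obtain ⟨M', hM'⟩ := eventually_atTop.1 <|
    eq_class_approximate_nash_general T hμ0 hP hrLip hPLip hW.1 hW.2.2 hWLip hξ01 hWconv hε hp
  refine ⟨M', fun M hM πm hπm => ?_⟩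
  obtain ⟨N', hN'⟩ := eventually_atTop.1 (hM' M hM.le)
  exact ⟨N', fun N hN πs hπs => hN' N hN.le πm hπm πs hπs⟩

end GMFG
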